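/- arXiv:2309.07905 — 2 statements merged into one kernel-verified Lean document; each statement's English description precedes it below -/
import Mathlib

section
/- Let G be a simple graph, let X, Y ⊆ V(G), and let k be a natural number. Then either (1) G contains k pairwise non-adjacent X-Y-paths, or (2) there exists a set of fewer than 2^{χ'_s(G)}·k vertices of G that separates X and Y, where χ'_s(G) denotes the strong chromatic index of G. -/
open SimpleGraph

universe u

variable {V : Type u}

/-- A packaged walk in `G`: a pair of endpoints together with a walk between them. -/
abbrev PathPkg (G : SimpleGraph V) : Type u := Σ x : V, Σ y : V, G.Walk x y

/-- The set of vertices of a packaged walk. -/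
def pkgSupport {G : SimpleGraph V} (p : PathPkg G) : Set V := {x | x ∈ p.2.2.support}

/-- The set of edges of a packaged walk. -/
def pkgEdges {G : SimpleGraph V} (p : PathPkg G) : Set (Sym2 V) := {e | e ∈ p.2.2.edges}

/-- `p` is an `X`-`Y`-path: a path whose first endpoint lies in `X` and whose
second endpoint lies in `Y`. -/
def IsXYPath (G : SimpleGraph V) (X Y : Set V) (p : PathPkg G) : Prop :=
  p.2.2.IsPath ∧ p.1 ∈ X ∧ p.2.1 ∈ Y

/-- Two packaged walks are (vertex-)disjoint. -/
def PkgDisjoint {G : SimpleGraph V} (p q : PathPkg G) : Prop :=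
  ∀ x, x ∈ pkgSupport p → x ∉ pkgSupport q

/-- Two packaged walks are non-adjacent: they are vertex-disjoint and no edge of `G`
joins a vertex of one to a vertex of the other. -/
def PkgNonAdj (G : SimpleGraph V) (p q : PathPkg G) : Prop :=
  ∀ a, a ∈ pkgSupport p → ∀ b, b ∈ pkgSupport q → a ≠ b ∧ ¬ G.Adj a b

/-- `Z` separates `X` and `Y` in `G`: every `X`-`Y`-path meets `Z`. -/
def XYSeparates (G : SimpleGraph V) (X Y Z : Set V) : Prop :=
  ∀ p : PathPkg G, IsXYPath G X Y p → ∃ z, z ∈ Z ∧ z ∈ pkgSupport p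

/-- `M` is an induced matching of `G`: a set of edges of `G` such that any two distinct
edges of `M` are at distance at least `2` in `G` (no endpoint of one equals or is
adjacent to an endpoint of the other). -/
def IsInducedMatching (G : SimpleGraph V) (M : Set (Sym2 V)) : Prop :=
  M ⊆ G.edgeSet ∧
    ∀ e₁, e₁ ∈ M → ∀ e₂, e₂ ∈ M → e₁ ≠ e₂ →
      ∀ a, a ∈ e₁ → ∀ b, b ∈ e₂ → a ≠ b ∧ ¬ G.Adj a b

/-- `G` admits a partition of its edge set into `n` induced matchings
(a strong edge colouring with `n` colours). -/
def HasStrongEdgeColoring (G : SimpleGraph V) (n : ℕ) : Prop :=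
  ∃ M : Fin n → Set (Sym2 V),
    (∀ i, IsInducedMatching G (M i)) ∧
    (Pairwise fun i j => Disjoint (M i) (M j)) ∧
    (⋃ i, M i) = G.edgeSet

/-- The strong chromatic index of `G`: the least number of induced matchings into
which the edge set of `G` can be partitioned. -/
noncomputable def strongChromaticIndex (G : SimpleGraph V) : ℕ :=
  sInf {n | HasStrongEdgeColoring G n}

/-- `G` contains the complete graph `K_r` as a topological minor: there are `r` distinct
branch vertices joined pairwise by internally disjoint paths whose internal vertices
avoid all branch vertices. -/
def HasTopKMinor (G : SimpleGraph V) (r : ℕ) : Prop :=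
  ∃ (f : Fin r → V) (P : (i j : Fin r) → i < j → G.Walk (f i) (f j)),
    Function.Injective f ∧
    (∀ i j hij, (P i j hij).IsPath) ∧
    (∀ i j hij x, x ∈ (P i j hij).support → x ≠ f i → x ≠ f j → ∀ l, x ≠ f l) ∧
    (∀ i j hij i' j' hij', (i, j) ≠ (i', j') →
      ∀ x, x ∈ (P i j hij).support → x ∈ (P i' j' hij').support →
        (x = f i ∨ x = f j) ∧ (x = f i' ∨ x = f j'))

/-- `G` contains the complete graph `K_n` as a minor, witnessed by `n` nonempty,
pairwise disjoint, connected branch sets joined pairwise by edges. -/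
def HasKMinor (G : SimpleGraph V) (n : ℕ) : Prop :=
  ∃ B : Fin n → Set V,
    (∀ i, (B i).Nonempty) ∧
    (∀ i, (G.induce (B i)).Connected) ∧
    (Pairwise fun i j => Disjoint (B i) (B j)) ∧
    (∀ i j, i ≠ j → ∃ a ∈ B i, ∃ b ∈ B j, G.Adj a b)

/-!
Fix a strong edge colouring with `χ` colours and suppose that no set of fewer than `2 ^ χ * k`
vertices separates `X` and `Y`, so that Menger's theorem yields `2 ^ χ * k` disjoint `X`-`Y`-paths.
The colours are processed one by one, halving the number of paths each time, while maintaining that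
every edge of a processed colour between two vertices of the paths lies on one of the paths.

To process an induced matching `M`, take the union `K` of the current paths and of the edges of `M`
spanned by them, and contract the edges of `M`. A separator of the contracted graph at most doubles
when lifted to `K`, so Menger's theorem gives half as many disjoint paths there, and shortest paths
of `K` inside their preimages are disjoint, chordless and not joined by `M`. An edge of an earlier
colour outside `M` has an endpoint `u` that `M` leaves unmatched, because `M` is induced. All edges
of `K` at `u` belong to the old path through `u`, and as both old and new paths meet `X` and `Y`
only in their ends, they have the same degree at `u`. Hence the new path keeps every edge of the old
one at `u`, and the invariant survives.
-/

section Joined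

variable {G H : SimpleGraph V} {X Y U U' : Set V} {u v : V}

/-- The packaged walk `p` is an `X`-`Y`-walk all of whose vertices lie in `U`. -/
structure IsXYWalkIn (G : SimpleGraph V) (X Y U : Set V) (p : PathPkg G) : Prop where
  start_mem : p.1 ∈ X
  end_mem : p.2.1 ∈ Y
  support_subset : pkgSupport p ⊆ U

/-- The set `U` contains an `X`-`Y`-walk of `G`. In particular `G` has an `X`-`Y`-path avoiding `Z`
iff `XYJoinedIn G X Y Zᶜ`, and `XYJoinedIn G X {v} U` says that `v` can be reached from `X` inside
`U`. -/
def XYJoinedIn (G : SimpleGraph V) (X Y U : Set V) : Prop :=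
  ∃ p, IsXYWalkIn G X Y U p

/-- An `X`-`Y`-path that meets `X` only in its first and `Y` only in its last vertex. -/
structure IsProperXYPath (G : SimpleGraph V) (X Y : Set V) (p : PathPkg G) : Prop where
  isXYPath : IsXYPath G X Y p
  eq_start : ∀ v ∈ pkgSupport p, v ∈ X → v = p.1
  eq_end : ∀ v ∈ pkgSupport p, v ∈ Y → v = p.2.1

theorem start_mem_pkgSupport (p : PathPkg G) : p.1 ∈ pkgSupport p := p.2.2.start_mem_support

theorem end_mem_pkgSupport (p : PathPkg G) : p.2.1 ∈ pkgSupport p := p.2.2.end_mem_support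

theorem IsXYWalkIn.xyJoinedIn_of_pkgEdges_subset {p : PathPkg G} (hp : IsXYWalkIn G X Y U p)
    (hH : pkgEdges p ⊆ H.edgeSet) : XYJoinedIn H X Y U :=
  ⟨⟨p.1, p.2.1, p.2.2.transfer H fun _ he ↦ hH he⟩, hp.start_mem, hp.end_mem, fun _ hv ↦
    hp.support_subset <| by simpa [pkgSupport] using hv⟩

namespace XYJoinedIn

theorem mono (hG : G ≤ H) (hU : U ⊆ U') (h : XYJoinedIn G X Y U) : XYJoinedIn H X Y U' := by
  obtain ⟨p, hp⟩ := h
  exact IsXYWalkIn.xyJoinedIn_of_pkgEdges_subset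
    ⟨hp.start_mem, hp.end_mem, hp.support_subset.trans hU⟩
    fun _ he ↦ edgeSet_mono hG (p.2.2.edges_subset_edgeSet he)

theorem symm (h : XYJoinedIn G X Y U) : XYJoinedIn G Y X U := by
  obtain ⟨⟨x, y, p⟩, hx, hy, hp⟩ := h
  exact ⟨⟨y, x, p.reverse⟩, hy, hx, fun v hv ↦ hp <| by simpa [pkgSupport] using hv⟩

theorem of_mem (hX : v ∈ X) (hY : v ∈ Y) (hU : v ∈ U) : XYJoinedIn G X Y U :=
  ⟨⟨v, v, .nil⟩, hX, hY, by simpa [pkgSupport] using hU⟩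

theorem of_adj (hX : u ∈ X) (hY : v ∈ Y) (huv : G.Adj u v) (hu : u ∈ U) (hv : v ∈ U) :
    XYJoinedIn G X Y U :=
  ⟨⟨u, v, huv.toWalk⟩, hX, hY, by
    rintro w hw
    obtain rfl | rfl : w = u ∨ w = v := by simpa [pkgSupport] using hw
    · exact hu
    · exact hv⟩

theorem trans (hXv : XYJoinedIn G X {v} U) (hvY : XYJoinedIn G {v} Y U) : XYJoinedIn G X Y U := by
  obtain ⟨⟨x, v, p⟩, hx, rfl, hp⟩ := hXv
  obtain ⟨⟨v', y, q⟩, rfl, hy, hq⟩ := hvY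
  refine ⟨⟨x, y, p.append q⟩, hx, hy, fun w hw ↦ ?_⟩
  rcases (Walk.mem_support_append_iff _ _).1 hw with hw | hw
  exacts [hp hw, hq hw]

theorem mem_of_singleton (h : XYJoinedIn G X {v} U) : v ∈ U := by
  obtain ⟨p, -, rfl, hp⟩ := h
  exact hp (end_mem_pkgSupport p)

theorem step (h : XYJoinedIn G X {u} U) (huv : G.Adj u v) (hv : v ∈ U) : XYJoinedIn G X {v} U :=
  h.trans (of_adj rfl rfl huv h.mem_of_singleton hv)

theorem exists_mem_of_step (h : XYJoinedIn G X Y U) {q : V → Prop}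
    (start : ∀ x ∈ X, x ∈ U → q x)
    (step : ∀ u v, G.Adj u v → v ∈ U → q u → q v) : ∃ y ∈ Y, q y := by
  obtain ⟨⟨x, y, p⟩, hx, hy, hp⟩ := h
  refine ⟨y, hy, ?_⟩
  have hqx : q x := start x hx (hp p.start_mem_support)
  clear hx hy start
  induction p with
  | nil => exact hqx
  | cons huv p ih =>
    have hp' : ∀ w ∈ p.support, w ∈ U := fun w hw ↦ hp (List.mem_cons_of_mem _ hw)
    exact ih hp' (step _ _ huv (hp' _ p.start_mem_support) hqx)

end XYJoinedIn

theorem xySeparates_iff_not_xyJoinedIn {Z : Set V} :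
    XYSeparates G X Y Z ↔ ¬ XYJoinedIn G X Y Zᶜ := by
  classical
  constructor
  · rintro hZ ⟨⟨x, y, p⟩, hx, hy, hp⟩
    obtain ⟨z, hzZ, hz⟩ := hZ ⟨x, y, p.bypass⟩ ⟨p.bypass_isPath, hx, hy⟩
    exact hp (p.support_bypass_subset_support hz) hzZ
  · intro hZ p hp
    by_contra! hno
    exact hZ ⟨p, hp.2.1, hp.2.2, fun v hv hvZ ↦ hno v hvZ hv⟩

end Joined

section ShortestWalk

variable {G : SimpleGraph V} {X Y U : Set V} {p : PathPkg G}

theorem isProperXYPath_of_minimalFor_length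
    (hp : MinimalFor (IsXYWalkIn G X Y U) (fun q ↦ q.2.2.length) p) : IsProperXYPath G X Y p := by
  classical
  rcases p with ⟨x, y, p⟩
  obtain ⟨hx, hy, hU⟩ := hp.prop
  have le_length {x' y' : V} (hx' : x' ∈ X) (hy' : y' ∈ Y) (q : G.Walk x' y')
      (hq : q.support ⊆ p.support) : p.length ≤ q.length :=
    have hq' : IsXYWalkIn G X Y U ⟨x', y', q⟩ := ⟨hx', hy', fun _ hv ↦ hU (hq hv)⟩
    hp.le hq'
  refine ⟨⟨?_, hx, hy⟩, fun v hv hvX ↦ ?_, fun v hv hvY ↦ ?_⟩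
  · rw [← p.bypass_eq_self_of_length_le_length_bypass
      (le_length hx hy _ p.support_bypass_subset_support)]
    exact p.bypass_isPath
  · by_contra hne
    exact (p.length_dropUntil_lt_length hv hne).not_ge
      (le_length hvX hy _ (p.support_dropUntil_subset_support hv))
  · by_contra hne
    exact (p.length_takeUntil_lt_length hv hne).not_ge
      (le_length hx hvY _ (p.support_takeUntil_subset_support hv))

theorem isChordless_of_minimalFor_length
    (hp : MinimalFor (IsXYWalkIn G X Y U) (fun q ↦ q.2.2.length) p) : p.2.2.IsChordless := by
  rcases p with ⟨x, y, p⟩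
  obtain ⟨hx, hy, hU⟩ := hp.prop
  have mem_edges_of_lt : ∀ i j, i < j → j ≤ p.length → G.Adj (p.getVert i) (p.getVert j) →
      s(p.getVert i, p.getVert j) ∈ p.edges := by
    intro i j hij hj hadj
    let shortcut : G.Walk x y := (p.take i).append (.cons hadj (p.drop j))
    have hsupport : shortcut.support ⊆ p.support := by
      intro w hw
      rw [Walk.mem_support_append_iff, Walk.support_cons, List.mem_cons] at hw
      rcases hw with hw | rfl | hw
      · exact (p.isSubwalk_take i).support_subset hw
      · exact p.getVert_mem_support i
      · exact (p.isSubwalk_drop j).support_subset hw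
    have hwalk : IsXYWalkIn G X Y U ⟨x, y, shortcut⟩ := ⟨hx, hy, fun _ hv ↦ hU (hsupport hv)⟩
    have hlength : p.length ≤ shortcut.length := hp.le hwalk
    rw [Walk.length_append, Walk.length_cons, Walk.take_length, Walk.drop_length] at hlength
    obtain rfl : j = i + 1 := by lia
    exact p.mk_mem_edges_iff_exists.2 ⟨i, by lia, rfl⟩
  refine Walk.isChordless_iff_forall_mem_edges.2 fun u v hu hv huv ↦ ?_
  obtain ⟨i, rfl, hi⟩ := Walk.mem_support_iff_exists_getVert.1 hu
  obtain ⟨j, rfl, hj⟩ := Walk.mem_support_iff_exists_getVert.1 hv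
  rcases lt_trichotomy i j with hij | rfl | hij
  · exact mem_edges_of_lt i j hij hj huv
  · exact absurd huv G.irrefl
  · exact Sym2.eq_swap ▸ mem_edges_of_lt j i hij hi huv.symm

theorem XYJoinedIn.exists_isProperXYPath (h : XYJoinedIn G X Y U) :
    ∃ p, IsProperXYPath G X Y p ∧ p.2.2.IsChordless ∧ pkgSupport p ⊆ U := by
  obtain ⟨p, hp⟩ := exists_minimalFor_of_wellFoundedLT (IsXYWalkIn G X Y U)
    (fun q ↦ q.2.2.length) h
  exact ⟨p, isProperXYPath_of_minimalFor_length hp, isChordless_of_minimalFor_length hp,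
    hp.prop.support_subset⟩

theorem IsProperXYPath.xyJoinedIn_compl {v : V} (hp : IsProperXYPath G X Y p)
    (hv : v ∈ pkgSupport p) (hne : v ≠ p.2.1) : XYJoinedIn G X {v} Yᶜ := by
  classical
  obtain ⟨⟨hpath, hx, -⟩, -, hend⟩ := hp
  refine ⟨⟨p.1, v, p.2.2.takeUntil v hv⟩, hx, rfl, fun w hw hwY ↦ ?_⟩
  obtain rfl := hend w (p.2.2.support_takeUntil_subset_support hv hw) hwY
  exact Walk.endpoint_notMem_support_takeUntil hpath hv hne.symm hw

end ShortestWalk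

section Linkages

variable {G H : SimpleGraph V} {X Y : Set V} {k : ℕ}

/-- `G` has `k` pairwise disjoint `X`-`Y`-paths, recorded by pairwise disjoint vertex sets that
contain them. -/
def XYLinked (G : SimpleGraph V) (X Y : Set V) (k : ℕ) : Prop :=
  ∃ C : Fin k → Set V, Pairwise (fun i j ↦ Disjoint (C i) (C j)) ∧ ∀ i, XYJoinedIn G X Y (C i)

/-- No set of fewer than `k` vertices separates `X` and `Y` in `G`. -/
def XYInseparable (G : SimpleGraph V) (X Y : Set V) (k : ℕ) : Prop :=
  ∀ Z : Finset V, Z.card < k → XYJoinedIn G X Y (↑Z)ᶜ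

theorem XYInseparable.symm (h : XYInseparable G X Y k) : XYInseparable G Y X k :=
  fun Z hZ ↦ (h Z hZ).symm

theorem XYLinked.mono (hG : G ≤ H) (h : XYLinked G X Y k) : XYLinked H X Y k := by
  obtain ⟨C, hdisj, hC⟩ := h
  exact ⟨C, hdisj, fun i ↦ (hC i).mono hG subset_rfl⟩

theorem xyLinked_card {ι : Type*} {A : Finset ι} {C : ι → Set V}
    (hdisj : (A : Set ι).PairwiseDisjoint C) (hC : ∀ a ∈ A, XYJoinedIn G X Y (C a)) :
    XYLinked G X Y A.card :=
  ⟨fun i ↦ C (A.equivFin.symm i), fun i j hij ↦ hdisj (A.equivFin.symm i).2 (A.equivFin.symm j).2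
    fun h ↦ hij (A.equivFin.symm.injective (Subtype.ext h)), fun i ↦ hC _ (A.equivFin.symm i).2⟩

theorem XYLinked.le_card_of_separates (h : XYLinked G X Y k) {Z : Finset V}
    (hZ : ¬ XYJoinedIn G X Y (↑Z)ᶜ) : k ≤ Z.card := by
  obtain ⟨C, hdisj, hC⟩ := h
  have hmeet : ∀ i, ∃ z ∈ Z, z ∈ C i := by
    intro i
    by_contra! hno
    exact hZ ((hC i).mono le_rfl fun v hv hvZ ↦ hno v hvZ hv)
  choose z hzZ hzC using hmeet
  have hinj : Function.Injective z := fun i j hij ↦ by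
    by_contra hne
    exact Set.disjoint_left.1 (hdisj hne) (hzC i) (hij ▸ hzC j)
  simpa using Finset.card_le_card_of_injOn z (s := Finset.univ) (fun i _ ↦ hzZ i) hinj.injOn

end Linkages

section Menger

variable {G G₀ : SimpleGraph V} {X Y U : Set V} {x y : V} {k : ℕ}

theorem not_xyJoinedIn_compl_self {A : Set V} : ¬ XYJoinedIn G X A Aᶜ := by
  rintro ⟨p, -, hA, hp⟩
  exact hp (end_mem_pkgSupport p) hA

theorem XYJoinedIn.to_insert {S : Set V}
    (hadj : ∀ u v, G.Adj u v → G₀.Adj u v ∨ s(u, v) = s(x, y))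
    (hY : ¬ XYJoinedIn G₀ X Y Sᶜ) (hy : ¬ XYJoinedIn G₀ X {y} Sᶜ) (h : XYJoinedIn G X Y U) :
    XYJoinedIn G₀ X (insert x S) U := by
  by_contra hno
  have avoid_S : U \ insert x S ⊆ Sᶜ := fun v hv hvS ↦ hv.2 (.inr hvS)
  obtain ⟨y', hy', hreach⟩ :=
    h.exists_mem_of_step (q := fun v ↦ XYJoinedIn G₀ X {v} (U \ insert x S))
      (fun x' hx' hU ↦ of_mem hx' rfl ⟨hU, fun hS ↦ hno (of_mem hx' hS hU)⟩)
      (fun u v huv hvU hu ↦ by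
        rcases hadj u v huv with huv | huv
        · refine hu.step huv ⟨hvU, fun hv ↦ hno ?_⟩
          have hu' : XYJoinedIn G₀ X {u} U := hu.mono le_rfl Set.sdiff_subset
          exact hu'.trans (of_adj rfl hv huv hu'.mem_of_singleton hvU)
        · obtain ⟨rfl, -⟩ | ⟨rfl, -⟩ := Sym2.eq_iff.1 huv
          · exact absurd (.inl rfl) hu.mem_of_singleton.2
          · exact absurd (hu.mono le_rfl avoid_S) hy)
  exact hY ((hreach.trans (of_mem rfl hy' hreach.mem_of_singleton)).mono le_rfl avoid_S)

/-- The sets `C a`, for `a ∈ A`, are the vertex sets of disjoint paths from `X` to the vertices `a`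
of `A`, where the path ending in `a` meets `A` in `a` only. -/
structure IsLinkageOnto (G : SimpleGraph V) (X A : Set V) (C : V → Set V) : Prop where
  pairwiseDisjoint : A.PairwiseDisjoint C
  xyJoinedIn : ∀ a ∈ A, XYJoinedIn G X {a} (C a)
  eq_or_xyJoinedIn_compl : ∀ a ∈ A, ∀ v ∈ C a, v = a ∨ XYJoinedIn G X {v} Aᶜ

theorem XYLinked.exists_isLinkageOnto {A : Finset V} (h : XYLinked G X A A.card) :
    ∃ C, IsLinkageOnto G X A C := by
  obtain ⟨C, hdisj, hC⟩ := h
  choose P hP _ hPC using fun i ↦ (hC i).exists_isProperXYPath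
  have hmem (i) : (P i).2.1 ∈ A := (hP i).isXYPath.2.2
  have eq_of_mem {i j v} (hi : v ∈ pkgSupport (P i)) (hj : v ∈ pkgSupport (P j)) : i = j := by
    by_contra hne
    exact Set.disjoint_left.1 (hdisj hne) (hPC i hi) (hPC j hj)
  have hinj : Function.Injective fun i ↦ (P i).2.1 := fun i j hij ↦
    eq_of_mem (end_mem_pkgSupport (P i)) (by
      rw [show (P i).2.1 = (P j).2.1 from hij]
      exact end_mem_pkgSupport (P j))
  have hsurj : ∀ a ∈ A, ∃ i, (P i).2.1 = a := fun a ha ↦ by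
    obtain ⟨i, -, hi⟩ := Finset.surjOn_of_injOn_of_card_le (s := Finset.univ) _
      (fun i _ ↦ hmem i) hinj.injOn (by simp) ha
    exact ⟨i, hi⟩
  refine ⟨fun a ↦ {v | ∃ i, (P i).2.1 = a ∧ v ∈ pkgSupport (P i)}, ?_, ?_, ?_⟩
  · rintro a - b - hab
    refine Set.disjoint_left.2 ?_
    rintro v ⟨i, rfl, hi⟩ ⟨j, rfl, hj⟩
    exact hab (congrArg (fun i ↦ (P i).2.1) (eq_of_mem hi hj))
  · intro a ha
    obtain ⟨i, rfl⟩ := hsurj a ha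
    exact ⟨P i, (hP i).isXYPath.2.1, rfl, fun v hv ↦ ⟨i, rfl, hv⟩⟩
  · rintro a - v ⟨i, rfl, hv⟩
    exact or_iff_not_imp_left.2 ((hP i).xyJoinedIn_compl hv)

theorem IsLinkageOnto.eq_of_mem {S : Set V} {C D : V → Set V}
    (hC : IsLinkageOnto G X (insert x S) C) (hD : IsLinkageOnto G Y (insert y S) D)
    (hS : ¬ XYJoinedIn G X Y Sᶜ) (hx : ¬ XYJoinedIn G Y {x} Sᶜ) (hy : ¬ XYJoinedIn G X {y} Sᶜ)
    {a b v : V} (ha : a ∈ insert x S) (hb : b ∈ insert y S) (hva : v ∈ C a) (hvb : v ∈ D b) :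
    a = b := by
  have avoid_S (w : V) : (insert w S)ᶜ ⊆ Sᶜ := Set.compl_subset_compl.2 (Set.subset_insert w S)
  rcases hC.eq_or_xyJoinedIn_compl a ha v hva with rfl | hXv <;>
    rcases hD.eq_or_xyJoinedIn_compl b hb v hvb with rfl | hYv
  · rfl
  · replace hYv := hYv.mono le_rfl (avoid_S y)
    obtain rfl : v = x := ha.resolve_right hYv.mem_of_singleton
    exact absurd hYv hx
  · replace hXv := hXv.mono le_rfl (avoid_S x)
    obtain rfl : v = y := hb.resolve_right hXv.mem_of_singleton
    exact absurd hXv hy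
  · exact absurd ((hXv.mono le_rfl (avoid_S x)).trans (hYv.mono le_rfl (avoid_S y)).symm) hS

theorem IsLinkageOnto.xyLinked [DecidableEq V] {S : Finset V} {C D : V → Set V}
    (hC : IsLinkageOnto G₀ X (insert x S) C) (hD : IsLinkageOnto G₀ Y (insert y S) D)
    (hS : ¬ XYJoinedIn G₀ X Y (↑S)ᶜ) (hx : ¬ XYJoinedIn G₀ Y {x} (↑S)ᶜ)
    (hy : ¬ XYJoinedIn G₀ X {y} (↑S)ᶜ) (hyS : y ∉ S) (hG : G₀ ≤ G) (hxy : G.Adj x y) :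
    XYLinked G X Y (insert x S).card := by
  let σ : V → V := Function.update id x y
  have σ_x : σ x = y := Function.update_self ..
  have σ_of_ne {a} (ha : a ≠ x) : σ a = a := Function.update_of_ne ha ..
  have σ_mem {a} (ha : a ∈ (insert x S : Set V)) : σ a ∈ (insert y S : Set V) := by
    grind
  have σ_inj {a b} (ha : a ∈ (insert x S : Set V)) (hb : b ∈ (insert x S : Set V))
      (hab : σ a = σ b) : a = b := by
    grind
  have σ_eq {a b} (ha : a ∈ (insert x S : Set V)) (hab : a = σ b) : a = b := by
    have := hxy.ne
    grind
  have hcross {a b v} := hC.eq_of_mem hD hS hx hy (a := a) (b := b) (v := v)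
  refine xyLinked_card (C := fun a ↦ C a ∪ D (σ a)) (fun a ha b hb hab ↦ ?_) fun a ha ↦ ?_
  · rw [Finset.coe_insert] at ha hb
    refine Set.disjoint_left.2 ?_
    rintro v (hva | hva) (hvb | hvb)
    · exact Set.disjoint_left.1 (hC.pairwiseDisjoint ha hb hab) hva hvb
    · exact hab (σ_eq ha (hcross ha (σ_mem hb) hva hvb))
    · exact hab (σ_eq hb (hcross hb (σ_mem ha) hvb hva)).symm
    · exact Set.disjoint_left.1 (hD.pairwiseDisjoint (σ_mem ha) (σ_mem hb)
        fun h ↦ hab (σ_inj ha hb h)) hva hvb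
  · rw [← Finset.mem_coe, Finset.coe_insert] at ha
    have hXa : XYJoinedIn G X {a} (C a ∪ D (σ a)) :=
      (hC.xyJoinedIn a ha).mono hG Set.subset_union_left
    have hYa : XYJoinedIn G {σ a} Y (C a ∪ D (σ a)) :=
      ((hD.xyJoinedIn _ (σ_mem ha)).mono hG Set.subset_union_right).symm
    by_cases hax : a = x
    · subst hax
      exact (hXa.step (σ_x ▸ hxy) hYa.symm.mem_of_singleton).trans hYa
    · rw [σ_of_ne hax] at hXa hYa
      exact (σ_of_ne hax).symm ▸ hXa.trans hYa

theorem XYInseparable.xyLinked_bot (h : XYInseparable ⊥ X Y k) :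
    XYLinked (⊥ : SimpleGraph V) X Y k := by
  have exists_mem {U : Set V} (hU : XYJoinedIn ⊥ X Y U) : ∃ v, v ∈ X ∩ Y ∧ v ∈ U := by
    obtain ⟨v, hY, hX, hvU⟩ := hU.exists_mem_of_step (q := fun v ↦ v ∈ X ∧ v ∈ U)
      (fun _ ↦ And.intro) (fun _ _ huv ↦ huv.elim)
    exact ⟨v, ⟨hX, hY⟩, hvU⟩
  obtain ⟨A, hA, rfl⟩ : ∃ A : Finset V, ↑A ⊆ X ∩ Y ∧ A.card = k := by
    rcases (X ∩ Y).finite_or_infinite with hfin | hinf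
    · have hk : k ≤ hfin.toFinset.card := by
        by_contra! hlt
        obtain ⟨v, hv, hvc⟩ := exists_mem (h _ hlt)
        exact hvc (by simpa using hv)
      obtain ⟨A, hA, hcard⟩ := Finset.exists_subset_card_eq hk
      exact ⟨A, fun v hv ↦ hfin.mem_toFinset.1 (hA hv), hcard⟩
    · exact hinf.exists_subset_card_eq k
  exact xyLinked_card (C := fun v ↦ {v}) (fun a _ b _ hab ↦ Set.disjoint_singleton.2 hab)
    fun a ha ↦ .of_mem (hA ha).1 (hA ha).2 rfl

theorem XYJoinedIn.exists_adj_crossing (hG : XYJoinedIn G X Y U) (hG₀ : ¬ XYJoinedIn G₀ X Y U) :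
    ∃ x y, G.Adj x y ∧ ¬ G₀.Adj x y ∧ XYJoinedIn G₀ X {x} U ∧ ¬ XYJoinedIn G₀ X {y} U := by
  by_contra! hno
  obtain ⟨y, hy, hreach⟩ := hG.exists_mem_of_step (q := fun v ↦ XYJoinedIn G₀ X {v} U)
    (fun x hx hU ↦ of_mem hx rfl hU) fun u v huv hv hu ↦ by
      by_cases huv₀ : G₀.Adj u v
      · exact hu.step huv₀ hv
      · exact hno u v huv huv₀ hu
  exact hG₀ (hreach.trans (of_mem rfl hy hreach.mem_of_singleton))

-- Göring's argument: if `S` separates `X` and `Y` in `G₀` but not in `G`, then the new edge `xy`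
-- leaves the part reachable from `X`, and `S ∪ {x}` and `S ∪ {y}` are inseparable in `G₀` from `X`
-- and `Y` respectively; the resulting linkages meet only in `S` and are joined by `xy`.
theorem XYInseparable.xyLinked_of_add_edge {e : Sym2 V} (hG : G₀ ≤ G)
    (hadj : ∀ u v, G.Adj u v → G₀.Adj u v ∨ s(u, v) = e)
    (ih : ∀ {X Y}, XYInseparable G₀ X Y k → XYLinked G₀ X Y k) (h : XYInseparable G X Y k) :
    XYLinked G X Y k := by
  classical
  by_cases hsep : XYInseparable G₀ X Y k
  · exact (ih hsep).mono hG
  obtain ⟨S, hSk, hS⟩ : ∃ S : Finset V, S.card < k ∧ ¬ XYJoinedIn G₀ X Y (↑S)ᶜ := by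
    simpa [XYInseparable] using hsep
  obtain ⟨x, y, hxy, hxy₀, hXx, hXy⟩ := (h S hSk).exists_adj_crossing hS
  obtain rfl : s(x, y) = e := (hadj x y hxy).resolve_left hxy₀
  have hYx : ¬ XYJoinedIn G₀ Y {x} (↑S)ᶜ := fun hYx ↦ hS (hXx.trans hYx.symm)
  have hX : XYLinked G₀ X ↑(insert x S) k := ih fun Z hZ ↦ by
    simpa using (h Z hZ).to_insert hadj hS hXy
  have hY : XYLinked G₀ Y ↑(insert y S) k := ih fun Z hZ ↦ by
    simpa using (h.symm Z hZ).to_insert (fun u v ↦ Sym2.eq_swap (a := x) ▸ hadj u v)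
      (fun h ↦ hS h.symm) hYx
  have hyS : y ∉ S := fun hyS ↦ by
    have := hY.le_card_of_separates not_xyJoinedIn_compl_self
    rw [Finset.insert_eq_of_mem hyS] at this
    lia
  have hxS : x ∉ S := hXx.mem_of_singleton
  obtain rfl : (insert x S).card = k :=
    le_antisymm ((Finset.card_insert_le x S).trans hSk)
      (hX.le_card_of_separates not_xyJoinedIn_compl_self)
  rw [Finset.card_insert_of_notMem hxS, ← Finset.card_insert_of_notMem hyS] at hY
  obtain ⟨C, hC⟩ := hX.exists_isLinkageOnto
  obtain ⟨D, hD⟩ := hY.exists_isLinkageOnto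
  rw [Finset.coe_insert] at hC hD
  exact hC.xyLinked hD hS hYx hXy hyS hG hxy

theorem XYInseparable.xyLinked_fromEdgeSet (s : Finset (Sym2 V))
    (h : XYInseparable (fromEdgeSet ↑s) X Y k) : XYLinked (fromEdgeSet ↑s) X Y k := by
  classical
  induction s using Finset.induction_on generalizing X Y with
  | empty =>
    rw [Finset.coe_empty, fromEdgeSet_empty] at h ⊢
    exact h.xyLinked_bot
  | insert e s _ ih =>
    refine h.xyLinked_of_add_edge (e := e) (fromEdgeSet_mono (by simp)) (fun u v huv ↦ ?_) ih
    simp only [fromEdgeSet_adj, Finset.coe_insert, Set.mem_insert_iff] at huv ⊢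
    tauto

-- Keep one walk `p` and, for each vertex `v` of `p`, the edges needed once `v` is deleted.
theorem exists_finset_edges_of_forall_xyJoinedIn
    (h : ∀ Z : Finset V, Z.card < k → XYJoinedIn G X Y (U \ Z)) :
    ∃ s : Finset (Sym2 V), ↑s ⊆ G.edgeSet ∧
      ∀ Z : Finset V, Z.card < k → XYJoinedIn (fromEdgeSet ↑s) X Y (U \ Z) := by
  classical
  induction k generalizing U with
  | zero => exact ⟨∅, by simp, by simp⟩
  | succ k ih =>
    obtain ⟨p, hp⟩ := h ∅ (by simp)
    have hinsert {v : V} {Z : Finset V} : (U \ {v}) \ (Z : Set V) = U \ ↑(insert v Z) := by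
      ext; simp; tauto
    choose s hsG hs using fun v ↦ ih (U := U \ {v}) fun Z hZ ↦
      hinsert ▸ h (insert v Z) ((Finset.card_insert_le v Z).trans_lt (by lia))
    let t : Finset (Sym2 V) := p.2.2.edges.toFinset ∪ p.2.2.support.toFinset.biUnion s
    refine ⟨t, ?_, fun Z hZ ↦ ?_⟩
    · intro e he
      simp only [t, Finset.coe_union, List.coe_toFinset, Finset.coe_biUnion, Set.mem_union,
        Set.mem_iUnion] at he
      rcases he with he | ⟨v, -, he⟩
      exacts [p.2.2.edges_subset_edgeSet he, hsG v he]
    by_cases hpZ : ∃ v ∈ Z, v ∈ pkgSupport p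
    · obtain ⟨v, hvZ, hvp⟩ := hpZ
      have hst : s v ⊆ t := fun e he ↦ Finset.mem_union_right _ <|
        Finset.mem_biUnion.2 ⟨v, List.mem_toFinset.2 hvp, he⟩
      have hj := hs v (Z.erase v) ((Finset.card_erase_lt_of_mem hvZ).trans_le (by lia))
      rw [hinsert, Finset.insert_erase hvZ] at hj
      exact hj.mono (fromEdgeSet_mono (Finset.coe_subset.2 hst)) subset_rfl
    · push Not at hpZ
      have hpU : IsXYWalkIn G X Y (U \ Z) p :=
        ⟨hp.start_mem, hp.end_mem, fun v hv ↦ ⟨(hp.support_subset hv).1, fun hvZ ↦ hpZ v hvZ hv⟩⟩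
      refine hpU.xyJoinedIn_of_pkgEdges_subset fun e he ↦ ?_
      rw [edgeSet_fromEdgeSet]
      exact ⟨Finset.mem_union_left _ (List.mem_toFinset.2 he),
        G.not_isDiag_of_mem_edgeSet (p.2.2.edges_subset_edgeSet he)⟩

theorem XYInseparable.xyLinked (h : XYInseparable G X Y k) : XYLinked G X Y k := by
  obtain ⟨s, hsG, hs⟩ := exists_finset_edges_of_forall_xyJoinedIn (U := Set.univ) fun Z hZ ↦ by
    simpa [Set.compl_eq_univ_sdiff] using h Z hZ
  have hfinite : XYInseparable (fromEdgeSet ↑s) X Y k := fun Z hZ ↦ by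
    simpa [Set.compl_eq_univ_sdiff] using hs Z hZ
  exact hfinite.xyLinked_fromEdgeSet.mono ((fromEdgeSet_le G).2 fun _ he ↦ hsG he.1)

end Menger

section Contraction

variable {W : Type*} {K : SimpleGraph V} {X Y : Set V} {f : V → W} {d m : ℕ}

theorem XYJoinedIn.map {U : Set W} (h : XYJoinedIn K X Y (f ⁻¹' U)) :
    XYJoinedIn (K.map f) (f '' X) (f '' Y) U := by
  obtain ⟨y, hy, hreach⟩ :=
    h.exists_mem_of_step (q := fun v ↦ XYJoinedIn (K.map f) (f '' X) {f v} U)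
      (fun x hx hU ↦ of_mem (Set.mem_image_of_mem f hx) rfl hU) fun u v huv hv hu ↦ by
        by_cases heq : f u = f v
        · exact heq ▸ hu
        · exact hu.step ((map_adj' ..).2 ⟨heq, u, v, huv, rfl, rfl⟩) hv
  exact hreach.trans (of_mem rfl (Set.mem_image_of_mem f hy) hreach.mem_of_singleton)

theorem XYJoinedIn.of_map {U : Set W} (hf : ∀ u v, f u = f v → XYJoinedIn K {u} {v} (f ⁻¹' {f u}))
    (h : XYJoinedIn (K.map f) (f '' X) (f '' Y) U) : XYJoinedIn K X Y (f ⁻¹' U) := by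
  have fibre_subset {u : V} (hu : f u ∈ U) : f ⁻¹' {f u} ⊆ f ⁻¹' U :=
    Set.preimage_mono (Set.singleton_subset_iff.2 hu)
  have within_fibre {u v : V} (hu : XYJoinedIn K X {u} (f ⁻¹' U)) (huv : f u = f v) :
      XYJoinedIn K X {v} (f ⁻¹' U) :=
    hu.trans ((hf u v huv).mono le_rfl (fibre_subset hu.mem_of_singleton))
  obtain ⟨_, ⟨y, hy, rfl⟩, hreach⟩ :=
    h.exists_mem_of_step (q := fun c ↦ ∀ v, f v = c → XYJoinedIn K X {v} (f ⁻¹' U))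
      (by
        rintro _ ⟨x, hx, rfl⟩ hU v hv
        exact within_fibre (of_mem hx rfl hU) hv.symm)
      (by
        rintro _ _ ⟨-, u, v, huv, rfl, rfl⟩ hvU hu v' hv'
        exact within_fibre ((hu u rfl).step huv hvU) hv'.symm)
  exact (hreach y rfl).trans (of_mem rfl hy (hreach y rfl).mem_of_singleton)

theorem XYLinked.exists_preimages (hd : 0 < d)
    (hcard : ∀ c, ∃ F : Finset V, F.card ≤ d ∧ f ⁻¹' {c} ⊆ F)
    (hf : ∀ u v, f u = f v → XYJoinedIn K {u} {v} (f ⁻¹' {f u}))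
    (h : XYLinked K X Y (d * m)) :
    ∃ C : Fin m → Set W, Pairwise (fun i j ↦ Disjoint (C i) (C j)) ∧
      ∀ i, XYJoinedIn K X Y (f ⁻¹' C i) := by
  classical
  choose F hFd hF using hcard
  have hinsep : XYInseparable (K.map f) (f '' X) (f '' Y) m := by
    intro Z hZ
    by_contra hsep
    have hsubset : (↑(Z.biUnion F) : Set V)ᶜ ⊆ f ⁻¹' (↑Z)ᶜ := fun v hv hvZ ↦
      hv (Finset.mem_biUnion.2 ⟨f v, hvZ, hF (f v) rfl⟩)
    have : d * m ≤ d * Z.card := calc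
      d * m ≤ (Z.biUnion F).card :=
        h.le_card_of_separates fun hj ↦ hsep (hj.mono le_rfl hsubset).map
      _ ≤ Z.card * d := Finset.card_biUnion_le_card_mul Z F d fun c _ ↦ hFd c
      _ = d * Z.card := mul_comm ..
    exact hZ.not_ge (Nat.le_of_mul_le_mul_left this hd)
  obtain ⟨C, hdisj, hC⟩ := hinsep.xyLinked
  exact ⟨C, hdisj, fun i ↦ (hC i).of_map hf⟩

end Contraction

section InducedMatching

variable {G : SimpleGraph V} {M N : Set (Sym2 V)} {u v w : V}

theorem IsInducedMatching.subset (hM : IsInducedMatching G M) (hN : N ⊆ M) :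
    IsInducedMatching G N :=
  ⟨hN.trans hM.1, fun e he e' he' ↦ hM.2 e (hN he) e' (hN he')⟩

theorem IsInducedMatching.mem_of_adj (hM : IsInducedMatching G M) {u' v' : V}
    (hu : s(u, u') ∈ M) (hv : s(v, v') ∈ M) (huv : G.Adj u v) : s(u, v) ∈ M := by
  by_cases heq : s(u, u') = s(v, v')
  · obtain ⟨rfl, -⟩ | ⟨rfl, rfl⟩ := Sym2.eq_iff.1 heq
    · exact absurd huv G.irrefl
    · exact hu
  · exact absurd huv (hM.2 _ hu _ hv heq u (Sym2.mem_mk_left ..) v (Sym2.mem_mk_left ..)).2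

theorem IsInducedMatching.eq_of_mem (hM : IsInducedMatching G M) (hv : s(u, v) ∈ M)
    (hw : s(u, w) ∈ M) : v = w := by
  by_contra hne
  exact (hM.2 _ hv _ hw (fun h ↦ hne (Sym2.congr_right.1 h)) u (Sym2.mem_mk_left ..) u
    (Sym2.mem_mk_left ..)).1 rfl

/-- The vertex `v` together with its partner in the matching `M`, if it has one. The sets
`matchingClass M v` serve as the vertices of the graph obtained by contracting `M`. -/
def matchingClass (M : Set (Sym2 V)) (v : V) : Set V :=
  insert v {w | s(v, w) ∈ M}

theorem IsInducedMatching.matchingClass_eq_pair (hM : IsInducedMatching G M) (huv : s(u, v) ∈ M) :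
    matchingClass M u = {u, v} := by
  have : {w | s(u, w) ∈ M} = {v} := Set.eq_singleton_iff_unique_mem.2
    ⟨huv, fun _ hw ↦ hM.eq_of_mem hw huv⟩
  rw [matchingClass, this]

theorem IsInducedMatching.matchingClass_eq_iff (hM : IsInducedMatching G M) :
    matchingClass M u = matchingClass M v ↔ u = v ∨ s(u, v) ∈ M := by
  constructor
  · intro h
    obtain hvu | huv : v ∈ matchingClass M u := h ▸ Set.mem_insert v _
    exacts [.inl hvu.symm, .inr huv]
  · rintro (rfl | huv)
    · rfl
    · rw [hM.matchingClass_eq_pair huv, hM.matchingClass_eq_pair (Sym2.eq_swap ▸ huv),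
        Set.pair_comm]

theorem IsInducedMatching.exists_finset_fibre_matchingClass (hM : IsInducedMatching G M)
    (c : Set V) : ∃ F : Finset V, F.card ≤ 2 ∧ matchingClass M ⁻¹' {c} ⊆ F := by
  classical
  rcases (matchingClass M ⁻¹' {c}).eq_empty_or_nonempty with hempty | ⟨u, rfl⟩
  · exact ⟨∅, by simp, by simp [hempty]⟩
  have hfibre {w} (hw : matchingClass M w = matchingClass M u) : w = u ∨ s(u, w) ∈ M :=
    (hM.matchingClass_eq_iff.1 hw.symm).imp_left Eq.symm
  by_cases hu : ∃ v, s(u, v) ∈ M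
  · obtain ⟨v, huv⟩ := hu
    exact ⟨{u, v}, Finset.card_le_two, fun w hw ↦ by
      simpa using (hfibre hw).imp_right fun huw ↦ hM.eq_of_mem huw huv⟩
  · exact ⟨{u}, by simp, fun w hw ↦ by
      simpa using (hfibre hw).resolve_right fun huw ↦ hu ⟨w, huw⟩⟩

theorem IsInducedMatching.xyJoinedIn_fibre_matchingClass {K : SimpleGraph V}
    (hM : IsInducedMatching G M) (hK : M ⊆ K.edgeSet)
    (huv : matchingClass M u = matchingClass M v) :
    XYJoinedIn K {u} {v} (matchingClass M ⁻¹' {matchingClass M u}) := by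
  rcases hM.matchingClass_eq_iff.1 huv with rfl | h
  · exact .of_mem rfl rfl rfl
  · exact .of_adj rfl rfl (hK h) rfl huv.symm

end InducedMatching

section PathDegree

variable {G K : SimpleGraph V} {X Y : Set V} {u : V}

open Classical in
theorem IsProperXYPath.ncard_edges_add {p : PathPkg G} (hp : IsProperXYPath G X Y p)
    (hu : u ∈ pkgSupport p) :
    {w | s(u, w) ∈ pkgEdges p}.ncard + (if u ∈ X then 1 else 0) + (if u ∈ Y then 1 else 0) = 2 := by
  obtain ⟨⟨hpath, hx, hy⟩, hstart, hend⟩ := hp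
  have hX : u ∈ X ↔ u = p.1 := ⟨hstart u hu, fun h ↦ h ▸ hx⟩
  have hY : u ∈ Y ↔ u = p.2.1 := ⟨hend u hu, fun h ↦ h ▸ hy⟩
  rcases p with ⟨x, y, p⟩
  have hneighbor : {w | s(u, w) ∈ pkgEdges ⟨x, y, p⟩} = p.toSubgraph.neighborSet u := by
    ext w
    exact p.adj_toSubgraph_iff_mem_edges.symm
  simp only [hX, hY, hneighbor]
  by_cases hnil : p.Nil
  · obtain rfl := hnil.eq
    obtain rfl := Walk.eq_nil_iff_nil.2 hnil
    obtain rfl : u = x := by simpa [pkgSupport] using hu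
    simp
  have hxy : x ≠ y := fun h ↦ hnil (by subst h; exact Walk.isPath_iff_nil.1 hpath)
  obtain ⟨i, rfl, hi⟩ := Walk.mem_support_iff_exists_getVert.1 hu
  rcases Nat.eq_zero_or_pos i with rfl | hi0
  · simp [hpath.neighborSet_toSubgraph_startpoint hnil, hxy]
  rcases hi.eq_or_lt with rfl | hi
  · simp [hpath.neighborSet_toSubgraph_endpoint hnil, hxy.symm]
  · rw [hpath.ncard_neighborSet_toSubgraph_internal_eq_two hi0.ne' hi]
    rw [if_neg, if_neg]
    · rw [hpath.getVert_eq_end_iff hi.le]; lia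
    · rw [hpath.getVert_eq_start_iff hi.le]; lia

theorem IsProperXYPath.mem_pkgEdges_of_subset {p : PathPkg G} {q : PathPkg K}
    (hp : IsProperXYPath G X Y p) (hq : IsProperXYPath K X Y q) (hup : u ∈ pkgSupport p)
    (huq : u ∈ pkgSupport q) (hsubset : ∀ w, s(u, w) ∈ pkgEdges q → s(u, w) ∈ pkgEdges p)
    {w : V} (hw : s(u, w) ∈ pkgEdges p) : s(u, w) ∈ pkgEdges q := by
  have hfinite : {w | s(u, w) ∈ pkgEdges p}.Finite :=
    p.2.2.finite_neighborSet_toSubgraph.subset fun _ hw ↦ p.2.2.adj_toSubgraph_iff_mem_edges.2 hw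
  have heq : {w | s(u, w) ∈ pkgEdges q} = {w | s(u, w) ∈ pkgEdges p} :=
    Set.eq_of_subset_of_ncard_le hsubset
      (by have := hp.ncard_edges_add hup; have := hq.ncard_edges_add huq; lia) hfinite
  exact heq.superset hw

end PathDegree

section InducedLinkage

variable {G : SimpleGraph V} {X Y : Set V} {E M N : Set (Sym2 V)} {m : ℕ}

/-- A family of disjoint proper `X`-`Y`-paths such that every edge of `E` between vertices of these
paths is an edge of one of them. If `E` is the whole edge set, the paths are pairwise non-adjacent
and induced. -/
structure IsInducedLinkage (G : SimpleGraph V) (X Y : Set V) (E : Set (Sym2 V)) {ι : Type*}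
    (P : ι → PathPkg G) : Prop where
  isProperXYPath : ∀ i, IsProperXYPath G X Y (P i)
  eq_of_mem : ∀ {i j v}, v ∈ pkgSupport (P i) → v ∈ pkgSupport (P j) → i = j
  mem_pkgEdges : ∀ {i j u v}, u ∈ pkgSupport (P i) → v ∈ pkgSupport (P j) → s(u, v) ∈ E →
    s(u, v) ∈ pkgEdges (P i)

/-- The set of all vertices of a family of walks. -/
def linkageSupport {ι : Type*} (P : ι → PathPkg G) : Set V := ⋃ i, pkgSupport (P i)

/-- The union of a family of walks with additional edges `N`. -/
def linkageGraph {ι : Type*} (P : ι → PathPkg G) (N : Set (Sym2 V)) : SimpleGraph V :=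
  fromEdgeSet ((⋃ i, pkgEdges (P i)) ∪ N)

theorem XYLinked.exists_isInducedLinkage_empty (h : XYLinked G X Y m) :
    ∃ P : Fin m → PathPkg G, IsInducedLinkage G X Y ∅ P := by
  obtain ⟨C, hdisj, hC⟩ := h
  choose P hP _ hPC using fun i ↦ (hC i).exists_isProperXYPath
  refine ⟨P, hP, fun {i j v} hi hj ↦ ?_, fun _ _ h ↦ h.elim⟩
  by_contra hne
  exact Set.disjoint_left.1 (hdisj hne) (hPC i hi) (hPC j hj)

section LinkageGraph

variable {ι : Type*} {P : ι → PathPkg G} {u v : V}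

theorem linkageGraph_adj_iff (hN : N ⊆ G.edgeSet) :
    (linkageGraph P N).Adj u v ↔ (∃ i, s(u, v) ∈ pkgEdges (P i)) ∨ s(u, v) ∈ N := by
  have hne (h : (∃ i, s(u, v) ∈ pkgEdges (P i)) ∨ s(u, v) ∈ N) : u ≠ v := by
    rcases h with ⟨i, hi⟩ | hN'
    exacts [((P i).2.2.adj_of_mem_edges hi).ne, G.ne_of_adj (hN hN')]
  simp only [linkageGraph, fromEdgeSet_adj, Set.mem_union, Set.mem_iUnion]
  exact and_iff_left_of_imp hne

theorem linkageGraph_le (hN : N ⊆ G.edgeSet) : linkageGraph P N ≤ G := by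
  intro u v huv
  rcases (linkageGraph_adj_iff hN).1 huv with ⟨i, hi⟩ | h
  exacts [(P i).2.2.adj_of_mem_edges hi, hN h]

theorem mem_linkageSupport_of_adj (hN : N ⊆ G.edgeSet) (hNP : N ⊆ (linkageSupport P).sym2)
    (huv : (linkageGraph P N).Adj u v) : v ∈ linkageSupport P := by
  rcases (linkageGraph_adj_iff hN).1 huv with ⟨i, hi⟩ | h
  exacts [Set.mem_iUnion.2 ⟨i, (P i).2.2.snd_mem_support_of_mem_edges hi⟩, (hNP h).2]

theorem XYJoinedIn.inter_of_adj {K : SimpleGraph V} {U W : Set V} (hX : X ⊆ W)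
    (hW : ∀ u v, K.Adj u v → v ∈ W) (h : XYJoinedIn K X Y U) : XYJoinedIn K X Y (U ∩ W) := by
  obtain ⟨y, hy, hreach⟩ := h.exists_mem_of_step (q := fun v ↦ XYJoinedIn K X {v} (U ∩ W))
    (fun x hx hU ↦ of_mem hx rfl ⟨hU, hX hx⟩)
    (fun u v huv hv hu ↦ hu.step huv ⟨hv, hW u v huv⟩)
  exact hreach.trans (of_mem rfl hy hreach.mem_of_singleton)

theorem IsInducedLinkage.xyLinked_linkageGraph {n : ℕ} {P : Fin n → PathPkg G}
    (hP : IsInducedLinkage G X Y E P) (hN : N ⊆ G.edgeSet) :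
    XYLinked (linkageGraph P N) (X ∩ linkageSupport P) (Y ∩ linkageSupport P) n := by
  have hsubset (i) : pkgSupport (P i) ⊆ linkageSupport P := Set.subset_iUnion (pkgSupport ∘ P) i
  refine ⟨fun i ↦ pkgSupport (P i), fun i j hij ↦ Set.disjoint_left.2 fun v hi hj ↦
    hij (hP.eq_of_mem hi hj), fun i ↦ ?_⟩
  obtain ⟨-, hx, hy⟩ := (hP.isProperXYPath i).isXYPath
  have hwalk :
      IsXYWalkIn G (X ∩ linkageSupport P) (Y ∩ linkageSupport P) (pkgSupport (P i)) (P i) :=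
    ⟨⟨hx, hsubset i (start_mem_pkgSupport _)⟩, ⟨hy, hsubset i (end_mem_pkgSupport _)⟩, subset_rfl⟩
  refine hwalk.xyJoinedIn_of_pkgEdges_subset fun e he ↦ ?_
  induction e with
  | _ u v => exact (linkageGraph_adj_iff hN).2 (.inl ⟨i, he⟩)

end LinkageGraph

/-- A family of disjoint chordless proper `X`-`Y`-paths in `linkageGraph P N`, no two of which are
joined by an edge of `N`. -/
structure IsReroutedLinkage {ι κ : Type*} (X Y : Set V) (P : ι → PathPkg G) (N : Set (Sym2 V))
    (Q : κ → PathPkg (linkageGraph P N)) : Prop where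
  isProperXYPath : ∀ i, IsProperXYPath (linkageGraph P N) X Y (Q i)
  isChordless : ∀ i, (Q i).2.2.IsChordless
  subset_linkageSupport : ∀ i, pkgSupport (Q i) ⊆ linkageSupport P
  eq_of_mem : ∀ {i j v}, v ∈ pkgSupport (Q i) → v ∈ pkgSupport (Q j) → i = j
  eq_of_mem_matching : ∀ {i j u v}, u ∈ pkgSupport (Q i) → v ∈ pkgSupport (Q j) → s(u, v) ∈ N →
    i = j

theorem IsInducedLinkage.exists_isReroutedLinkage {P : Fin (2 * m) → PathPkg G}
    (hP : IsInducedLinkage G X Y E P) (hN : IsInducedMatching G N)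
    (hNP : N ⊆ (linkageSupport P).sym2) :
    ∃ Q : Fin m → PathPkg (linkageGraph P N), IsReroutedLinkage X Y P N Q := by
  have hNK : N ⊆ (linkageGraph P N).edgeSet := fun e he ↦ by
    induction e with
    | _ u v => exact (linkageGraph_adj_iff hN.1).2 (.inr he)
  obtain ⟨C, hdisj, hC⟩ := (hP.xyLinked_linkageGraph hN.1).exists_preimages two_pos
    hN.exists_finset_fibre_matchingClass fun u v ↦ hN.xyJoinedIn_fibre_matchingClass hNK
  choose Q hQ hchordless hQC using fun i ↦ ((hC i).inter_of_adj Set.inter_subset_right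
    fun u v ↦ mem_linkageSupport_of_adj hN.1 hNP).exists_isProperXYPath
  have eq_of_class {i j u v} (hu : u ∈ pkgSupport (Q i)) (hv : v ∈ pkgSupport (Q j))
      (huv : matchingClass N u = matchingClass N v) : i = j := by
    by_contra hne
    exact Set.disjoint_left.1 (hdisj hne) (hQC i hu).1 (huv ▸ (hQC j hv).1)
  refine ⟨Q, fun i ↦ ?_, hchordless, fun i v hv ↦ (hQC i hv).2,
    fun hi hj ↦ eq_of_class hi hj rfl,
    fun hu hv huv ↦ eq_of_class hu hv (hN.matchingClass_eq_iff.2 (.inr huv))⟩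
  obtain ⟨⟨hpath, hx, hy⟩, hstart, hend⟩ := hQ i
  exact ⟨⟨hpath, hx.1, hy.1⟩, fun v hv hvX ↦ hstart v hv ⟨hvX, (hQC i hv).2⟩,
    fun v hv hvY ↦ hend v hv ⟨hvY, (hQC i hv).2⟩⟩

namespace IsReroutedLinkage

variable {ι κ : Type*} {P : ι → PathPkg G} {Q : κ → PathPkg (linkageGraph P N)} {i j : κ} {u v : V}

-- At an unmatched vertex `Q i` can only use edges of the path of `P` through it, and both have the
-- same degree there.
theorem mem_pkgEdges_of_unmatched (hQ : IsReroutedLinkage X Y P N Q)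
    (hP : IsInducedLinkage G X Y E P) (hN : N ⊆ G.edgeSet) (hu : u ∈ pkgSupport (Q i))
    (hv : v ∈ linkageSupport P) (huv : s(u, v) ∈ E) (hunmatched : ∀ w, s(u, w) ∉ N) :
    s(u, v) ∈ pkgEdges (Q i) := by
  obtain ⟨a, ha⟩ := Set.mem_iUnion.1 (hQ.subset_linkageSupport i hu)
  obtain ⟨b, hb⟩ := Set.mem_iUnion.1 hv
  refine (hP.isProperXYPath a).mem_pkgEdges_of_subset (hQ.isProperXYPath i) ha hu (fun w hw ↦ ?_)
    (hP.mem_pkgEdges ha hb huv)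
  obtain ⟨c, hc⟩ := ((linkageGraph_adj_iff hN).1 ((Q i).2.2.adj_of_mem_edges hw)).resolve_right
    (hunmatched w)
  obtain rfl := hP.eq_of_mem ha ((P c).2.2.fst_mem_support_of_mem_edges hc)
  exact hc

theorem mem_pkgEdges (hQ : IsReroutedLinkage X Y P N Q) (hP : IsInducedLinkage G X Y E P)
    (hE : E ⊆ G.edgeSet) (hN : IsInducedMatching G N) (hu : u ∈ pkgSupport (Q i))
    (hv : v ∈ pkgSupport (Q j)) (huv : s(u, v) ∈ E ∪ N) : s(u, v) ∈ pkgEdges (Q i) := by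
  by_cases huvN : s(u, v) ∈ N
  · obtain rfl := hQ.eq_of_mem_matching hu hv huvN
    exact Walk.isChordless_iff_forall_mem_edges.1 (hQ.isChordless i) hu hv
      ((linkageGraph_adj_iff hN.1).2 (.inr huvN))
  have huvE : s(u, v) ∈ E := huv.resolve_right huvN
  have hunmatched : (∀ w, s(u, w) ∉ N) ∨ ∀ w, s(v, w) ∉ N := by
    by_contra! hmatched
    obtain ⟨⟨u', hu'⟩, v', hv'⟩ := hmatched
    exact huvN (hN.mem_of_adj hu' hv' (hE huvE))
  rcases hunmatched with hunmatched | hunmatched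
  · exact hQ.mem_pkgEdges_of_unmatched hP hN.1 hu (hQ.subset_linkageSupport j hv) huvE hunmatched
  · have hvu := hQ.mem_pkgEdges_of_unmatched hP hN.1 hv (hQ.subset_linkageSupport i hu)
      (Sym2.eq_swap ▸ huvE) hunmatched
    obtain rfl := hQ.eq_of_mem hu ((Q j).2.2.snd_mem_support_of_mem_edges hvu)
    exact Sym2.eq_swap ▸ hvu

theorem isInducedLinkage_mapLe (hQ : IsReroutedLinkage X Y P N Q)
    (hP : IsInducedLinkage G X Y E P) (hE : E ⊆ G.edgeSet) (hN : IsInducedMatching G N) :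
    IsInducedLinkage G X Y (E ∪ N)
      fun i ↦ ⟨(Q i).1, (Q i).2.1, (Q i).2.2.mapLe (linkageGraph_le hN.1)⟩ := by
  have hK : linkageGraph P N ≤ G := linkageGraph_le hN.1
  have hsupport (q : PathPkg (linkageGraph P N)) :
      pkgSupport (⟨q.1, q.2.1, q.2.2.mapLe hK⟩ : PathPkg G) = pkgSupport q := by
    simp [pkgSupport]
  have hedges (q : PathPkg (linkageGraph P N)) :
      pkgEdges (⟨q.1, q.2.1, q.2.2.mapLe hK⟩ : PathPkg G) = pkgEdges q := by
    simp [pkgEdges]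
  refine ⟨fun i ↦ ?_, ?_, ?_⟩
  · obtain ⟨⟨hpath, hx, hy⟩, hstart, hend⟩ := hQ.isProperXYPath i
    exact ⟨⟨hpath.mapLe hK, hx, hy⟩, hsupport (Q i) ▸ hstart, hsupport (Q i) ▸ hend⟩
  · intro i j v hi hj
    rw [hsupport] at hi hj
    exact hQ.eq_of_mem hi hj
  · intro i j u v hu hv huv
    rw [hsupport] at hu hv
    rw [hedges]
    exact hQ.mem_pkgEdges hP hE hN hu hv huv

end IsReroutedLinkage

theorem IsInducedLinkage.exists_union {P : Fin (2 * m) → PathPkg G}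
    (hP : IsInducedLinkage G X Y E P) (hE : E ⊆ G.edgeSet) (hM : IsInducedMatching G M) :
    ∃ Q : Fin m → PathPkg G, IsInducedLinkage G X Y (E ∪ M) Q := by
  have hN : IsInducedMatching G (M ∩ (linkageSupport P).sym2) := hM.subset Set.inter_subset_left
  obtain ⟨Q, hQ⟩ := hP.exists_isReroutedLinkage hN Set.inter_subset_right
  obtain ⟨hproper, hdisj, hedges⟩ := hQ.isInducedLinkage_mapLe hP hE hN
  refine ⟨_, hproper, hdisj, fun {i j u v} hu hv huv ↦ hedges hu hv ?_⟩
  have mem_linkageSupport {i w} (hw : w ∈ ((Q i).2.2.mapLe (linkageGraph_le hN.1)).support) :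
      w ∈ linkageSupport P := hQ.subset_linkageSupport i <| by
    rwa [Walk.support_mapLe_eq_support] at hw
  exact huv.imp_right fun h ↦ ⟨h, mem_linkageSupport hu, mem_linkageSupport hv⟩

theorem XYLinked.exists_isInducedLinkage_iUnion {ι : Type*} {M : ι → Set (Sym2 V)}
    (hM : ∀ i, IsInducedMatching G (M i)) (s : Finset ι) (h : XYLinked G X Y (2 ^ s.card * m)) :
    ∃ P : Fin m → PathPkg G, IsInducedLinkage G X Y (⋃ i ∈ s, M i) P := by
  classical
  induction s using Finset.induction_on generalizing m with
  | empty =>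
    rw [Finset.card_empty, pow_zero, one_mul] at h
    simpa using h.exists_isInducedLinkage_empty
  | insert i s his ih =>
    rw [Finset.card_insert_of_notMem his, pow_succ, mul_assoc] at h
    obtain ⟨P, hP⟩ := ih h
    rw [Finset.set_biUnion_insert, Set.union_comm]
    exact hP.exists_union (Set.iUnion₂_subset fun i _ ↦ (hM i).1) (hM i)

theorem IsInducedLinkage.pkgNonAdj {ι : Type*} {P : ι → PathPkg G}
    (hP : IsInducedLinkage G X Y G.edgeSet P) {i j : ι} (hij : i ≠ j) :
    PkgNonAdj G (P i) (P j) := by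
  refine fun u hu v hv ↦ ⟨?_, fun huv ↦ hij ?_⟩
  · rintro rfl
    exact hij (hP.eq_of_mem hu hv)
  · exact hP.eq_of_mem ((P i).2.2.snd_mem_support_of_mem_edges (hP.mem_pkgEdges hu hv huv)) hv

theorem XYLinked.exists_pairwise_pkgNonAdj {n : ℕ} (hn : HasStrongEdgeColoring G n)
    (h : XYLinked G X Y (2 ^ n * m)) :
    ∃ P : Fin m → PathPkg G, (∀ i, IsXYPath G X Y (P i)) ∧
      Pairwise fun i j ↦ PkgNonAdj G (P i) (P j) := by
  obtain ⟨M, hM, -, hunion⟩ := hn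
  obtain ⟨P, hP⟩ : ∃ P : Fin m → PathPkg G, IsInducedLinkage G X Y G.edgeSet P := by
    simpa [hunion] using XYLinked.exists_isInducedLinkage_iUnion hM Finset.univ (by simpa using h)
  exact ⟨P, fun i ↦ (hP.isProperXYPath i).isXYPath, fun i j hij ↦ hP.pkgNonAdj hij⟩

end InducedLinkage

theorem statement_0 (G : SimpleGraph V) (X Y : Set V) (k : ℕ)
    (hχ : ∃ n, HasStrongEdgeColoring G n) :
    (∃ P : Fin k → PathPkg G,
        (∀ i, IsXYPath G X Y (P i)) ∧
        Pairwise fun i j => PkgNonAdj G (P i) (P j)) ∨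
    (∃ Z : Set V, Z.Finite ∧ Z.ncard < 2 ^ strongChromaticIndex G * k ∧
        XYSeparates G X Y Z) := by
  have hcoloring : HasStrongEdgeColoring G (strongChromaticIndex G) := Nat.sInf_mem hχ
  by_cases hinsep : XYInseparable G X Y (2 ^ strongChromaticIndex G * k)
  · exact .inl (hinsep.xyLinked.exists_pairwise_pkgNonAdj hcoloring)
  · obtain ⟨Z, hcard, hZ⟩ : ∃ Z : Finset V,
        Z.card < 2 ^ strongChromaticIndex G * k ∧ ¬ XYJoinedIn G X Y (↑Z)ᶜ := by
      simpa [XYInseparable] using hinsep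
    exact .inr ⟨Z, Z.finite_toSet, by rwa [Set.ncard_coe_finset],
      xySeparates_iff_not_xyJoinedIn.2 hZ⟩
end

section
/- Let G be a simple graph, let X, Y ⊆ V(G), and let k be a natural number. If G contains at least 2^{χ'_s(G)}·k pairwise disjoint X-Y-paths, then G contains k pairwise non-adjacent X-Y-paths, where χ'_s(G) denotes the strong chromatic index of G. -/
open SimpleGraph

universe u

variable {V : Type u}

/-!
The colours of a strong edge colouring are treated one at a time. Each step halves the number of
paths and separates the remaining ones with respect to one more induced matching `M`; throughout,
the paths are disjoint, chordless, and not joined by edges of the colours already treated.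

For one step, group the paths in pairs. Close up every path to a directed cycle through a new
terminal, shared by the two paths of a pair, and contract the edges of `M`. The resulting
multigraph has in- and out-degree at most `2` everywhere, so after padding it with loops to become
`2`-regular, Hall's theorem provides a permutation `φ` of its nodes that moves along edges. The
`φ`-orbit of each terminal up to the first return to a terminal traces a connected region from `X`
to `Y`, which yields one new path per pair. Different regions have different nodes, so they are
disjoint and no edge of `M` joins them. An old edge `e` joining two regions would be an edge of an
old path that `φ` does not follow, which forces both of its ends to be contracted nodes; then `e`
joins two edges of `M`, contradicting that `M` is induced.
-/

theorem exists_section_injective_comp_of_card_fiber {T W W' : Type*} [Fintype T]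
    [DecidableEq W] [DecidableEq W'] {d : ℕ} (hd : d ≠ 0) (f : T → W) (g : T → W')
    (hf : ∀ w, d ≤ Finset.card {t | f t = w}) (hg : ∀ w, Finset.card {t | g t = w} ≤ d) :
    ∃ h : W → T, Function.RightInverse h f ∧ Function.Injective (g ∘ h) := by
  let neighbors (w : W) : Finset W' := Finset.image g {t | f t = w}
  have hall_condition (B : Finset W) : B.card ≤ (B.biUnion neighbors).card := by
    let edgesFrom : Finset T := {t | f t ∈ B}
    have lower : d * B.card ≤ edgesFrom.card := by
      refine Finset.mul_card_image_le_card_of_maps_to (f := f) (by simp [edgesFrom]) d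
        fun w hw => (hf w).trans (Finset.card_le_card fun t ht => ?_)
      simp_all [edgesFrom]
    have upper : edgesFrom.card ≤ d * (B.biUnion neighbors).card := by
      refine Finset.card_le_mul_card_image_of_maps_to (f := g) (fun t ht => ?_) d
        fun w _ => (Finset.card_le_card ?_).trans (hg w)
      · simp only [Finset.mem_biUnion, Finset.mem_image, Finset.mem_filter_univ, neighbors,
          edgesFrom] at ht ⊢
        exact ⟨f t, ht, t, rfl, rfl⟩
      · exact Finset.filter_subset_filter _ (Finset.subset_univ _)
    exact Nat.le_of_mul_le_mul_left (lower.trans upper) (Nat.pos_of_ne_zero hd)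
  obtain ⟨m, m_injective, m_mem⟩ :=
    (Finset.all_card_le_biUnion_card_iff_exists_injective neighbors).1 hall_condition
  have (w : W) : ∃ t, f t = w ∧ g t = m w := by simpa [neighbors] using m_mem w
  choose h hfh hgh using this
  exact ⟨h, hfh, by rwa [show g ∘ h = m from funext hgh]⟩

section ExitMap

theorem card_filter_sumElim_eq {α β γ : Type*} [Fintype α] [Fintype β] [DecidableEq γ]
    (f : α → γ) (g : β → γ) (c : γ) :
    Finset.card {t | Sum.elim f g t = c} =
      Finset.card {a | f a = c} + Finset.card {b | g b = c} := by
  simp_rw [← Fintype.card_subtype]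
  rw [← Fintype.card_sum]
  exact Fintype.card_congr Equiv.subtypeSum

theorem card_filter_sigma_fst_eq {ι : Type*} [Fintype ι] [DecidableEq ι] (n : ι → ℕ) (i : ι) :
    Finset.card {x : Σ i, Fin (n i) | x.1 = i} = n i := by
  rw [← Fintype.card_subtype]
  exact (Fintype.card_congr (Equiv.sigmaSubtype i)).trans (Fintype.card_fin _)

variable {A W : Type*}

/-- A permutation `φ` of the classes of `c : A → W` that follows the dynamics `σ`: a class that
`φ` moves goes to the class of `σ a` for one of its own elements `a`, where it is *exited*. -/
def IsExitMap (σ : A → A) (c : A → W) (φ : Equiv.Perm W) : Prop :=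
  ∀ w, φ w ≠ w → ∃ a, c a = w ∧ φ w = c (σ a)

theorem exists_isExitMap_of_finite [Fintype A] [Finite W] [DecidableEq W] {σ : A → A}
    (hσ : Function.Injective σ) {c : A → W} {d : ℕ} (hd : d ≠ 0)
    (hc : ∀ w, Finset.card {a | c a = w} ≤ d) :
    ∃ φ : Equiv.Perm W, IsExitMap σ c φ ∧
      ∀ w, d ≤ Finset.card {a | c a = w} → ∃ a, c a = w ∧ φ w = c (σ a) := by
  have := Fintype.ofFinite W
  -- Padding with loops makes the multigraph with edges `c a → c (σ a)` regular of degree `d`.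
  let Loop := Σ w, Fin (d - Finset.card {a | c a = w})
  let source : A ⊕ Loop → W := Sum.elim c Sigma.fst
  let target : A ⊕ Loop → W := Sum.elim (c ∘ σ) Sigma.fst
  have card_source (w : W) : d ≤ Finset.card {t | source t = w} := by
    rw [card_filter_sumElim_eq, card_filter_sigma_fst_eq, Nat.add_sub_of_le (hc w)]
  have card_target (w : W) : Finset.card {t | target t = w} ≤ d := by
    have : Finset.card {a | (c ∘ σ) a = w} ≤ Finset.card {a | c a = w} :=
      Finset.card_le_card_of_injOn σ (fun a => by simp) hσ.injOn
    rw [card_filter_sumElim_eq, card_filter_sigma_fst_eq]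
    have := hc w
    omega
  obtain ⟨edge, source_edge, target_edge_injective⟩ :=
    exists_section_injective_comp_of_card_fiber hd source target card_source card_target
  have loop_or_exit (w : W) : (target (edge w) = w ∧ Finset.card {a | c a = w} < d) ∨
      ∃ a, c a = w ∧ target (edge w) = c (σ a) := by
    have hsource : source (edge w) = w := source_edge w
    generalize edge w = e at hsource ⊢
    rcases e with a | ⟨w', i⟩
    · exact .inr ⟨a, hsource, rfl⟩
    · obtain rfl : w' = w := hsource
      exact .inl ⟨rfl, Nat.lt_of_sub_pos i.pos⟩
  refine ⟨.ofBijective _ (Finite.injective_iff_bijective.1 target_edge_injective), ?_, ?_⟩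
  · exact fun w hw => (loop_or_exit w).resolve_left fun h => hw h.1
  · exact fun w hw => (loop_or_exit w).resolve_left fun h => hw.not_gt h.2

theorem exists_isExitMap [Fintype A] [DecidableEq W] {σ : A → A}
    (hσ : Function.Injective σ) {c : A → W} {d : ℕ} (hd : d ≠ 0)
    (hc : ∀ w, Finset.card {a | c a = w} ≤ d) :
    ∃ φ : Equiv.Perm W, IsExitMap σ c φ ∧
      ∀ w, Finset.card {a | c a = w} = d → ∃ a, c a = w ∧ φ w = c (σ a) := by
  classical
  obtain ⟨φ, exit, full⟩ := exists_isExitMap_of_finite hσ (c := Set.rangeFactorization c) hd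
    fun w => by simpa [Subtype.ext_iff] using hc w
  have lift {w : W} (hw : w ∈ Set.range c)
      (h : ∃ a, Set.rangeFactorization c a = ⟨w, hw⟩ ∧
        φ ⟨w, hw⟩ = Set.rangeFactorization c (σ a)) :
      ∃ a, c a = w ∧ Equiv.Perm.ofSubtype φ w = c (σ a) := by
    obtain ⟨a, ha, hφ⟩ := h
    refine ⟨a, congrArg Subtype.val ha, ?_⟩
    rw [Equiv.Perm.ofSubtype_apply_of_mem φ hw, hφ, Set.rangeFactorization_coe]
  refine ⟨Equiv.Perm.ofSubtype φ, fun w hw => ?_, fun w hw => ?_⟩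
  · have mem : w ∈ Set.range c := by
      contrapose! hw
      exact Equiv.Perm.ofSubtype_apply_of_not_mem φ hw
    refine lift mem (exit _ fun h => hw ?_)
    rw [Equiv.Perm.ofSubtype_apply_of_mem φ mem, h]
  · obtain ⟨a, ha⟩ := Finset.card_pos.1 (hw.symm ▸ Nat.pos_of_ne_zero hd)
    have mem : w ∈ Set.range c := ⟨a, by simpa using ha⟩
    exact lift mem (full _ (by simpa [Subtype.ext_iff] using hw.ge))

namespace IsExitMap

variable {σ : A → A} {c : A → W} {φ : Equiv.Perm W} {a : A}

theorem finite_setOf_ne [Finite A] (hφ : IsExitMap σ c φ) : {w | φ w ≠ w}.Finite :=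
  (Set.finite_range c).subset fun w hw => (hφ w hw).imp fun _ => And.left

theorem apply_eq_of_unique_source (hφ : IsExitMap σ c φ) (hmoved : φ (c a) ≠ c a)
    (hunique : ∀ b, c b = c a → b = a) : φ (c a) = c (σ a) := by
  obtain ⟨b, hb, hφb⟩ := hφ (c a) hmoved
  rw [hφb, hunique b hb]

theorem apply_eq_of_unique_target (hφ : IsExitMap σ c φ) (hσ : Function.Injective σ)
    (hmoved : φ (c (σ a)) ≠ c (σ a))
    (hunique : ∀ b, c b = c (σ a) → b = σ a) : φ (c a) = c (σ a) := by
  have hpred : φ (φ.symm (c (σ a))) = c (σ a) := φ.apply_symm_apply _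
  obtain ⟨b, hb, hφb⟩ := hφ (φ.symm (c (σ a)))
    fun hfix => hmoved (by rwa [← hpred, φ.apply_eq_iff_eq])
  rw [hpred] at hφb
  obtain rfl : b = a := hσ (hunique _ hφb.symm)
  rw [hb, hpred]

end IsExitMap

/-- The points of the `φ`-orbit of `z` strictly between `z` and the first return to `Z`. -/
inductive IsBeforeReturn (φ : Equiv.Perm W) (Z : Set W) (z : W) : W → Prop
  | first (h : φ z ∉ Z) : IsBeforeReturn φ Z z (φ z)
  | next {w : W} (hw : IsBeforeReturn φ Z z w) (h : φ w ∉ Z) : IsBeforeReturn φ Z z (φ w)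

namespace IsBeforeReturn

variable {φ : Equiv.Perm W} {Z : Set W} {z z' w : W}

theorem notMem (hw : IsBeforeReturn φ Z z w) : w ∉ Z := by
  cases hw <;> assumption

theorem eq_of_mem (hz : z ∈ Z) (hz' : z' ∈ Z) (hw : IsBeforeReturn φ Z z w)
    (hw' : IsBeforeReturn φ Z z' w) : z = z' := by
  induction hw with
  | first =>
    generalize hx : φ z = x at hw'
    cases hw' with
    | first => exact φ.injective hx
    | next hv => exact absurd (φ.injective hx ▸ hz) hv.notMem
  | @next v hv _ ih =>
    generalize hx : φ v = x at hw'
    cases hw' with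
    | first => exact absurd (φ.injective hx ▸ hz') hv.notMem
    | next hv' => exact ih (φ.injective hx ▸ hv')

theorem apply_ne_self (hz : z ∈ Z) (hw : IsBeforeReturn φ Z z w) : φ w ≠ w := by
  induction hw with
  | first h => exact fun hfix => h ((φ.injective hfix).symm ▸ hz)
  | next _ _ ih => exact fun hfix => ih (φ.injective hfix)

theorem exists_apply_mem (hφ : {w | φ w ≠ w}.Finite) (hz : z ∈ Z) (hfirst : φ z ∉ Z) :
    ∃ w, IsBeforeReturn φ Z z w ∧ φ w ∈ Z := by
  by_contra! never
  have iterate_mem (n : ℕ) : IsBeforeReturn φ Z z (φ^[n + 1] z) := by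
    induction n with
    | zero => exact .first hfirst
    | succ n ih =>
      rw [Function.iterate_succ_apply']
      exact ih.next (never _ ih)
  obtain ⟨m, n, hmn, heq⟩ := hφ.exists_lt_map_eq_of_forall_mem
    fun n => (iterate_mem n).apply_ne_self hz
  obtain ⟨d, rfl⟩ := Nat.exists_eq_add_of_lt hmn
  rw [show m + d + 1 + 1 = (m + 1) + (d + 1) by omega,
    Function.iterate_add_apply _ (m + 1) (d + 1)] at heq
  exact (iterate_mem d).notMem ((φ.injective.iterate (m + 1) heq) ▸ hz)

end IsBeforeReturn

end ExitMap

section Walks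

variable {G : SimpleGraph V} {u v w : V}

theorem exists_isPath_isChordless_support_subset (p : G.Walk u v) :
    ∃ q : G.Walk u v, q.IsPath ∧ q.IsChordless ∧ q.support ⊆ p.support := by
  classical
  obtain ⟨q, hqp, hmin⟩ := (measure Walk.length).wf.has_min
    {q : G.Walk u v | q.support ⊆ p.support} ⟨p, List.Subset.refl _⟩
  have no_shorter (r : G.Walk u v) (hr : r.support ⊆ q.support) : q.length ≤ r.length :=
    not_lt.1 (hmin r (List.Subset.trans hr hqp))
  have no_shortcut {s t : ℕ} (hst : s < t) (ht : t ≤ q.length)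
      (hadj : G.Adj (q.getVert s) (q.getVert t)) : t = s + 1 := by
    have := no_shorter ((q.take s).append (.cons hadj (q.drop t))) fun x hx => by
      rw [Walk.mem_support_append_iff, Walk.support_cons, List.mem_cons] at hx
      rcases hx with hx | rfl | hx
      · exact (q.isSubwalk_take s).support_subset hx
      · exact q.getVert_mem_support s
      · exact (q.isSubwalk_drop t).support_subset hx
    rw [Walk.length_append, Walk.length_cons, Walk.take_length, Walk.drop_length] at this
    omega
  refine ⟨q, ?_, Walk.isChordless_iff_forall_mem_edges.2 fun x y hx hy hadj => ?_, hqp⟩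
  · rw [← q.bypass_eq_self_of_length_le_length_bypass
      (no_shorter _ q.support_bypass_subset_support)]
    exact q.bypass_isPath
  · obtain ⟨s, rfl, hs⟩ := Walk.mem_support_iff_exists_getVert.1 hx
    obtain ⟨t, rfl, ht⟩ := Walk.mem_support_iff_exists_getVert.1 hy
    rw [Walk.mk_mem_edges_iff_exists]
    rcases lt_trichotomy s t with hst | rfl | hts
    · exact ⟨s, by omega, by rw [no_shortcut hst ht hadj]⟩
    · exact absurd hadj (G.loopless.irrefl _)
    · exact ⟨t, by omega, by rw [no_shortcut hts hs hadj.symm, Sym2.eq_swap]⟩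

theorem exists_walk_support_subset_of_eq_or_adj {S : Set V} (hw : w ∈ S)
    (h : v = w ∨ G.Adj v w) (hp : ∃ p : G.Walk u v, ∀ x ∈ p.support, x ∈ S) :
    ∃ p : G.Walk u w, ∀ x ∈ p.support, x ∈ S := by
  obtain ⟨p, hp⟩ := hp
  obtain rfl | hadj := h
  · exact ⟨p, hp⟩
  · refine ⟨p.concat hadj, fun x hx => ?_⟩
    rw [Walk.support_concat, List.mem_append, List.mem_singleton] at hx
    exact hx.elim (hp x) (fun h => h ▸ hw)

theorem eq_add_one_or_eq_add_one_of_mem_edges {p : G.Walk u v} (hp : p.IsPath) {s t : ℕ}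
    (hs : s ≤ p.length) (ht : t ≤ p.length) (h : s(p.getVert s, p.getVert t) ∈ p.edges) :
    t = s + 1 ∨ s = t + 1 := by
  obtain ⟨i, hi, heq⟩ := p.mk_mem_edges_iff_exists.1 h
  have getVert_inj {a b : ℕ} (ha : a ≤ p.length) (hb : b ≤ p.length)
      (hab : p.getVert a = p.getVert b) : a = b := hp.getVert_injOn ha hb hab
  obtain ⟨his, hit⟩ | ⟨hit, his⟩ := Sym2.eq_iff.1 heq
  · left
    rw [← getVert_inj hi.le hs his, ← getVert_inj hi ht hit]
  · right
    rw [← getVert_inj hi.le ht hit, ← getVert_inj hi hs his]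

end Walks

section Contraction

variable {G : SimpleGraph V} {M : Set (Sym2 V)} {u v w : V}

theorem IsInducedMatching.eq_of_mem_of_mem (hM : IsInducedMatching G M)
    (huv : s(u, v) ∈ M) (huw : s(u, w) ∈ M) : v = w := by
  by_contra hvw
  exact (hM.2 _ huv _ huw (by rwa [Ne, Sym2.congr_right]) u (by simp) u (by simp)).1 rfl

/-- The equivalence relation on vertices whose quotient contracts the edges of `M`. -/
def matchingSetoid (hM : IsInducedMatching G M) : Setoid V where
  r u v := u = v ∨ s(u, v) ∈ M
  iseqv :=
    { refl := fun _ => .inl rfl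
      symm := fun h => h.imp Eq.symm fun h => Sym2.eq_swap ▸ h
      trans := by
        rintro u v w (rfl | huv) (rfl | hvw)
        · exact .inl rfl
        · exact .inr hvw
        · exact .inr huv
        · exact .inl (hM.eq_of_mem_of_mem (Sym2.eq_swap ▸ huv) hvw) }

theorem matchingSetoid_mk_eq_iff {hM : IsInducedMatching G M} :
    Quotient.mk (matchingSetoid hM) u = Quotient.mk (matchingSetoid hM) v ↔
      u = v ∨ s(u, v) ∈ M :=
  Quotient.eq (r := matchingSetoid hM)

end Contraction

/-- The positions on the cycles obtained from the paths `P i` by closing up each of them with one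
extra position, the *terminal*. On the cycle `i`, the terminal is the last position and position
`t` before it stands for the `t`-th vertex of `P i`. -/
abbrev CyclicPosition {G : SimpleGraph V} {κ : Type*} (P : κ → PathPkg G) : Type _ :=
  Σ i, Fin ((P i).2.2.length + 2)

namespace CyclicPosition

section Family

variable {G : SimpleGraph V} {κ : Type*} {P : κ → PathPkg G} {a b : CyclicPosition P}

/-- The extra position that closes up a path to a cycle. -/
def IsTerminal (a : CyclicPosition P) : Prop := a.2 = Fin.last _

/-- The vertex at a position; at a terminal this is the junk value `(P a.1).2.1`. -/
def vertex (a : CyclicPosition P) : V := (P a.1).2.2.getVert a.2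

/-- The cyclic successor of a position. -/
def next (a : CyclicPosition P) : CyclicPosition P := ⟨a.1, a.2 + 1⟩

theorem next_injective : Function.Injective (next : CyclicPosition P → CyclicPosition P) :=
  Function.injective_id.sigma_map fun _ => add_left_injective 1

theorem vertex_mem_pkgSupport (a : CyclicPosition P) : a.vertex ∈ pkgSupport (P a.1) :=
  Walk.getVert_mem_support _ _

theorem le_length_of_not_isTerminal (ha : ¬a.IsTerminal) : (a.2 : ℕ) ≤ (P a.1).2.2.length :=
  Nat.le_of_lt_succ (Fin.val_lt_last ha)

theorem vertex_injOn (hpath : ∀ i, (P i).2.2.IsPath)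
    (hdisj : Pairwise fun i j => PkgDisjoint (P i) (P j)) :
    Set.InjOn vertex {a : CyclicPosition P | ¬a.IsTerminal} := by
  rintro ⟨i, s⟩ hs ⟨j, t⟩ ht h
  obtain rfl : i = j := by
    by_contra hij
    exact hdisj hij _ (vertex_mem_pkgSupport ⟨i, s⟩) (h ▸ vertex_mem_pkgSupport ⟨j, t⟩)
  have : (s : ℕ) = t := (hpath i).getVert_injOn
    (le_length_of_not_isTerminal hs) (le_length_of_not_isTerminal ht) h
  rw [Fin.ext this]

theorem val_next_of_not_isTerminal (ha : ¬a.IsTerminal) : (a.next.2 : ℕ) = a.2 + 1 :=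
  (Fin.val_add_one _).trans (if_neg ha)

theorem adj_vertex_next (ha : ¬a.IsTerminal) (hnext : ¬a.next.IsTerminal) :
    G.Adj a.vertex a.next.vertex := by
  have := le_length_of_not_isTerminal hnext
  rw [val_next_of_not_isTerminal ha] at this
  rw [vertex, vertex, val_next_of_not_isTerminal ha]
  exact (P a.1).2.2.adj_getVert_succ this

theorem val_next_of_isTerminal (ha : a.IsTerminal) : (a.next.2 : ℕ) = 0 :=
  (Fin.val_add_one _).trans (if_pos ha)

theorem not_isTerminal_next (ha : a.IsTerminal) : ¬a.next.IsTerminal := by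
  intro h
  have := val_next_of_isTerminal ha
  rw [h] at this
  simp at this

theorem vertex_next_of_isTerminal (ha : a.IsTerminal) : a.next.vertex = (P a.1).1 := by
  rw [vertex, val_next_of_isTerminal ha]
  exact Walk.getVert_zero _

theorem vertex_of_isTerminal_next (ha : ¬a.IsTerminal) (h : a.next.IsTerminal) :
    a.vertex = (P a.1).2.1 := by
  have hval := val_next_of_not_isTerminal ha
  rw [h, Fin.val_last] at hval
  rw [vertex, ← Nat.succ_injective hval]
  exact Walk.getVert_length _

theorem eq_next_or_eq_next_of_adj (hpath : ∀ i, (P i).2.2.IsPath)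
    (hchordless : ∀ i, (P i).2.2.IsChordless) (ha : ¬a.IsTerminal) (hb : ¬b.IsTerminal)
    (hab : a.1 = b.1) (hadj : G.Adj a.vertex b.vertex) : b = a.next ∨ a = b.next := by
  obtain ⟨i, s⟩ := a
  obtain ⟨j, t⟩ := b
  obtain rfl : i = j := hab
  have hedge := (hchordless i).mem_edges (Walk.getVert_mem_support _ _)
    (Walk.getVert_mem_support _ _) hadj
  refine (eq_add_one_or_eq_add_one_of_mem_edges (hpath i) (le_length_of_not_isTerminal ha)
    (le_length_of_not_isTerminal hb) hedge).imp (fun h => ?_) (fun h => ?_)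
  · rw [← val_next_of_not_isTerminal ha] at h
    exact congrArg (Sigma.mk i) (Fin.ext h)
  · rw [← val_next_of_not_isTerminal hb] at h
    exact congrArg (Sigma.mk i) (Fin.ext h)

end Family

section Node

variable {G : SimpleGraph V} {M : Set (Sym2 V)} {hM : IsInducedMatching G M} {ι : Type*}
  {P : ι × Bool → PathPkg G} {a b : CyclicPosition P} {j : ι}

open Classical in
/-- The node of a position in the digraph obtained from the cycles on `P` by contracting `M` and
identifying the terminals of `P (j, false)` and `P (j, true)`, for each `j`. -/
noncomputable def node (hM : IsInducedMatching G M) (a : CyclicPosition P) :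
    ι ⊕ Quotient (matchingSetoid hM) :=
  if a.IsTerminal then .inl a.1.1 else .inr (Quotient.mk _ a.vertex)

theorem node_eq_inl_iff : a.node hM = .inl j ↔ a.IsTerminal ∧ a.1.1 = j := by
  by_cases ha : a.IsTerminal <;> simp [node, ha]

theorem node_mem_range_inl_iff : a.node hM ∈ Set.range Sum.inl ↔ a.IsTerminal := by
  by_cases ha : a.IsTerminal <;> simp [node, ha]

theorem node_eq_node_iff (ha : ¬a.IsTerminal) :
    a.node hM = b.node hM ↔ ¬b.IsTerminal ∧ (a.vertex = b.vertex ∨ s(a.vertex, b.vertex) ∈ M) := by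
  by_cases hb : b.IsTerminal
  · simp [node, ha, hb]
  · simp [node, ha, hb, matchingSetoid_mk_eq_iff]

theorem mk_mem_of_node_eq (hpath : ∀ i, (P i).2.2.IsPath)
    (hdisj : Pairwise fun i j => PkgDisjoint (P i) (P j)) (ha : ¬a.IsTerminal) (hab : a ≠ b)
    (h : a.node hM = b.node hM) : s(a.vertex, b.vertex) ∈ M := by
  obtain ⟨hb, h⟩ := (node_eq_node_iff ha).1 h
  exact h.resolve_left fun h => hab (vertex_injOn hpath hdisj ha hb h)

theorem card_node_eq_inl [Fintype ι] [DecidableEq (ι ⊕ Quotient (matchingSetoid hM))] (j : ι) :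
    Finset.card {a : CyclicPosition P | a.node hM = .inl j} = 2 := by
  classical
  let terminal (b : Bool) : CyclicPosition P := ⟨(j, b), Fin.last _⟩
  have terminal_injective : Function.Injective terminal := fun b b' h =>
    congrArg (fun a : CyclicPosition P => a.1.2) h
  have : ({a | a.node hM = .inl j} : Finset (CyclicPosition P)) = Finset.univ.image terminal := by
    ext a
    simp only [Finset.mem_filter_univ, node_eq_inl_iff, Finset.mem_image, Finset.mem_univ, true_and]
    constructor
    · obtain ⟨⟨i, b⟩, t⟩ := a
      rintro ⟨ht, rfl⟩
      exact ⟨b, congrArg (Sigma.mk (i, b)) ht.symm⟩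
    · rintro ⟨b, rfl⟩
      exact ⟨rfl, rfl⟩
  rw [this, Finset.card_image_of_injective _ terminal_injective, Finset.card_univ,
    Fintype.card_bool]

theorem card_node_eq_le_two [Fintype ι] [DecidableEq (ι ⊕ Quotient (matchingSetoid hM))]
    (hpath : ∀ i, (P i).2.2.IsPath) (hdisj : Pairwise fun i j => PkgDisjoint (P i) (P j))
    (w : ι ⊕ Quotient (matchingSetoid hM)) :
    Finset.card {a : CyclicPosition P | a.node hM = w} ≤ 2 := by
  rcases w with j | q
  · exact (card_node_eq_inl j).le
  by_contra! three
  obtain ⟨a, ha, b, hb, c, hc, hab, hac, hbc⟩ := Finset.two_lt_card.1 three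
  rw [Finset.mem_filter_univ] at ha hb hc
  have not_terminal {d : CyclicPosition P} (hd : d.node hM = .inr q) : ¬d.IsTerminal := by
    rw [← node_mem_range_inl_iff (hM := hM), hd]
    simp
  have hMab := mk_mem_of_node_eq hpath hdisj (not_terminal ha) hab (ha.trans hb.symm)
  have hMac := mk_mem_of_node_eq hpath hdisj (not_terminal ha) hac (ha.trans hc.symm)
  exact hbc (vertex_injOn hpath hdisj (not_terminal hb) (not_terminal hc)
    (hM.eq_of_mem_of_mem hMab hMac))

end Node

section Region

variable {G : SimpleGraph V} {v : V} {M : Set (Sym2 V)} {hM : IsInducedMatching G M} {ι : Type*}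
  {j j' : ι} {P : ι × Bool → PathPkg G} {φ : Equiv.Perm (ι ⊕ Quotient (matchingSetoid hM))}
  {a b : CyclicPosition P}

/-- The positions whose nodes lie on the `φ`-orbit of the terminal node `j` before its first return
to a terminal node. -/
def region (P : ι × Bool → PathPkg G) (φ : Equiv.Perm (ι ⊕ Quotient (matchingSetoid hM))) (j : ι) :
    Set (CyclicPosition P) :=
  {a | IsBeforeReturn φ (Set.range Sum.inl) (.inl j) (a.node hM)}

theorem not_isTerminal_of_mem_region (ha : a ∈ region P φ j) : ¬a.IsTerminal :=
  fun h => ha.notMem (node_mem_range_inl_iff.2 h)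

theorem node_ne_node_of_mem_region (hj : j ≠ j') (ha : a ∈ region P φ j)
    (hb : b ∈ region P φ j') : a.node hM ≠ b.node hM := by
  intro h
  have ha' : IsBeforeReturn φ (Set.range Sum.inl) (.inl j) (b.node hM) := h ▸ ha
  exact hj (Sum.inl_injective (ha'.eq_of_mem (Set.mem_range_self j) (Set.mem_range_self j') hb))

theorem apply_node_ne_node_next (hj : j ≠ j') (ha : a ∈ region P φ j)
    (hnext : a.next ∈ region P φ j') : φ (a.node hM) ≠ a.next.node hM := by
  intro h
  have : a.next ∈ region P φ j := by
    have := ha.next (h ▸ hnext.notMem)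
    rwa [h] at this
  exact node_ne_node_of_mem_region hj this hnext rfl

theorem next_notMem_region (hpath : ∀ i, (P i).2.2.IsPath)
    (hdisj : Pairwise fun i j => PkgDisjoint (P i) (P j))
    (hφ : IsExitMap (next (P := P)) (node hM) φ) (hj : j ≠ j') (ha : a ∈ region P φ j) :
    a.next ∉ region P φ j' := by
  intro hnext
  have hmoved : φ (a.node hM) ≠ a.node hM := ha.apply_ne_self (Set.mem_range_self j)
  have hmoved_next : φ (a.next.node hM) ≠ a.next.node hM :=
    hnext.apply_ne_self (Set.mem_range_self j')
  have hsep := apply_node_ne_node_next hj ha hnext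
  obtain ⟨a', haa', ha'⟩ : ∃ a', a'.node hM = a.node hM ∧ a' ≠ a := by
    by_contra! hunique
    exact hsep (hφ.apply_eq_of_unique_source hmoved hunique)
  obtain ⟨b', hbb', hb'⟩ : ∃ b', b'.node hM = a.next.node hM ∧ b' ≠ a.next := by
    by_contra! hunique
    exact hsep (hφ.apply_eq_of_unique_target next_injective hmoved_next hunique)
  have ha_term := not_isTerminal_of_mem_region ha
  have hnext_term := not_isTerminal_of_mem_region hnext
  have hMa := mk_mem_of_node_eq hpath hdisj ha_term ha'.symm haa'.symm
  have hMb := mk_mem_of_node_eq hpath hdisj hnext_term hb'.symm hbb'.symm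
  have hne : s(a.vertex, a'.vertex) ≠ s(a.next.vertex, b'.vertex) := by
    intro heq
    have : s(a.vertex, a.next.vertex) ∈ M ∨ a.vertex = a.next.vertex := by
      rcases Sym2.eq_iff.1 heq with ⟨h, -⟩ | ⟨-, h⟩
      · exact .inr h
      · exact .inl (h ▸ hMa)
    exact node_ne_node_of_mem_region hj ha hnext
      ((node_eq_node_iff ha_term).2 ⟨hnext_term, this.symm⟩)
  exact (hM.2 _ hMa _ hMb hne a.vertex (by simp) a.next.vertex (by simp)).2
    (adj_vertex_next ha_term hnext_term)

theorem exists_walk_of_node_eq (ha : a ∈ region P φ j) (h : a.node hM = b.node hM)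
    (hp : ∃ p : G.Walk v a.vertex, ∀ x ∈ p.support, x ∈ vertex '' region P φ j) :
    ∃ p : G.Walk v b.vertex, ∀ x ∈ p.support, x ∈ vertex '' region P φ j := by
  have hb : b ∈ region P φ j := by rwa [region, Set.mem_ofPred_eq, ← h]
  refine exists_walk_support_subset_of_eq_or_adj (Set.mem_image_of_mem _ hb) ?_ hp
  exact ((node_eq_node_iff (not_isTerminal_of_mem_region ha)).1 h).2.imp_right fun h => hM.1 h

theorem exists_walk_next (ha : a ∈ region P φ j) (hnext : a.next ∈ region P φ j)
    (hp : ∃ p : G.Walk v a.vertex, ∀ x ∈ p.support, x ∈ vertex '' region P φ j) :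
    ∃ p : G.Walk v a.next.vertex, ∀ x ∈ p.support, x ∈ vertex '' region P φ j :=
  exists_walk_support_subset_of_eq_or_adj (Set.mem_image_of_mem _ hnext)
    (.inr (adj_vertex_next (not_isTerminal_of_mem_region ha)
      (not_isTerminal_of_mem_region hnext))) hp

theorem exists_walk_of_mem_region (hφ : IsExitMap (next (P := P)) (node hM) φ)
    (hstart : φ (.inl j) = a.next.node hM) (hb : b ∈ region P φ j) :
    ∃ p : G.Walk a.next.vertex b.vertex, ∀ x ∈ p.support, x ∈ vertex '' region P φ j := by
  change IsBeforeReturn φ (Set.range Sum.inl) (.inl j) (b.node hM) at hb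
  generalize hw : b.node hM = w at hb
  induction hb generalizing b with
  | first h =>
    have ha : a.next ∈ region P φ j := by
      rw [region, Set.mem_ofPred_eq, ← hstart]
      exact .first h
    exact exists_walk_of_node_eq ha (hstart.symm.trans hw.symm)
      ⟨.nil, by simpa using Set.mem_image_of_mem vertex ha⟩
  | next hv h ih =>
    obtain ⟨e, rfl, hexit⟩ := hφ _ (hv.apply_ne_self (Set.mem_range_self j))
    have he : e.next ∈ region P φ j := by
      rw [region, Set.mem_ofPred_eq, ← hexit]
      exact hv.next h
    exact exists_walk_of_node_eq he (hexit.symm.trans hw.symm) (exists_walk_next hv he (ih rfl))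

theorem exists_isXYPath_support_subset_region [Finite ι] {X Y : Set V}
    (hP : ∀ i, IsXYPath G X Y (P i)) (hφ : IsExitMap (next (P := P)) (node hM) φ)
    (ha : a.node hM = .inl j) (hstart : φ (.inl j) = a.next.node hM) :
    ∃ q : PathPkg G, IsXYPath G X Y q ∧ q.2.2.IsChordless ∧
      pkgSupport q ⊆ vertex '' region P φ j := by
  have ha_term := (node_eq_inl_iff.1 ha).1
  have hfirst : φ (.inl j) ∉ Set.range Sum.inl := by
    rw [hstart, node_mem_range_inl_iff]
    exact not_isTerminal_next ha_term
  obtain ⟨w, hw, hreturn⟩ := IsBeforeReturn.exists_apply_mem hφ.finite_setOf_ne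
    (Set.mem_range_self j) hfirst
  obtain ⟨e, rfl, hexit⟩ := hφ w (hw.apply_ne_self (Set.mem_range_self j))
  have he_term : e.next.IsTerminal := by rwa [hexit, node_mem_range_inl_iff] at hreturn
  obtain ⟨p, hp⟩ := exists_walk_of_mem_region hφ hstart hw
  obtain ⟨q, hq, hq_chordless, hqp⟩ := exists_isPath_isChordless_support_subset p
  have hX : a.next.vertex ∈ X := by
    rw [vertex_next_of_isTerminal ha_term]
    exact (hP a.1).2.1
  have hY : e.vertex ∈ Y := by
    rw [vertex_of_isTerminal_next (not_isTerminal_of_mem_region hw) he_term]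
    exact (hP e.1).2.2
  exact ⟨⟨_, _, q⟩, ⟨hq, hX, hY⟩, hq_chordless, fun x hx => hp x (hqp hx)⟩

end Region

end CyclicPosition

/-- A family of pairwise disjoint chordless `X`-`Y`-paths such that no edge in `D` joins two of
them: the invariant of the induction on colours, `D` being the edges of the colours treated. -/
structure IsLinkageAvoiding (G : SimpleGraph V) (X Y : Set V) (D : Set (Sym2 V)) {κ : Type*}
    (P : κ → PathPkg G) : Prop where
  isXYPath : ∀ i, IsXYPath G X Y (P i)
  isChordless : ∀ i, (P i).2.2.IsChordless
  disjoint : Pairwise fun i j => PkgDisjoint (P i) (P j)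
  notMem : Pairwise fun i j => ∀ a ∈ pkgSupport (P i), ∀ b ∈ pkgSupport (P j), s(a, b) ∉ D

namespace IsLinkageAvoiding

variable {G : SimpleGraph V} {X Y : Set V} {D M : Set (Sym2 V)} {κ ι : Type*}

theorem comp_injective {P : κ → PathPkg G} (hP : IsLinkageAvoiding G X Y D P) {f : ι → κ}
    (hf : Function.Injective f) : IsLinkageAvoiding G X Y D (P ∘ f) where
  isXYPath i := hP.isXYPath (f i)
  isChordless i := hP.isChordless (f i)
  disjoint := hP.disjoint.comp_of_injective hf
  notMem := hP.notMem.comp_of_injective hf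

variable {P : ι × Bool → PathPkg G} {hM : IsInducedMatching G M}
  {φ : Equiv.Perm (ι ⊕ Quotient (matchingSetoid hM))} {j j' : ι} {a b : CyclicPosition P}

open CyclicPosition

theorem mk_vertex_notMem (hP : IsLinkageAvoiding G X Y D P) (hD : D ⊆ G.edgeSet)
    (hφ : IsExitMap (next (P := P)) (node hM) φ) (hj : j ≠ j') (ha : a ∈ region P φ j)
    (hb : b ∈ region P φ j') : s(a.vertex, b.vertex) ∉ D := by
  intro hab
  have hpath (i : ι × Bool) := (hP.isXYPath i).1
  by_cases hsame : a.1 = b.1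
  · rcases eq_next_or_eq_next_of_adj hpath hP.isChordless (not_isTerminal_of_mem_region ha)
      (not_isTerminal_of_mem_region hb) hsame (hD hab) with rfl | rfl
    · exact next_notMem_region hpath hP.disjoint hφ hj ha hb
    · exact next_notMem_region hpath hP.disjoint hφ hj.symm hb ha
  · exact hP.notMem hsame _ a.vertex_mem_pkgSupport _ b.vertex_mem_pkgSupport hab

theorem exists_union [Finite ι] (hP : IsLinkageAvoiding G X Y D P) (hD : D ⊆ G.edgeSet)
    (hM : IsInducedMatching G M) : ∃ Q : ι → PathPkg G, IsLinkageAvoiding G X Y (D ∪ M) Q := by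
  classical
  have := Fintype.ofFinite ι
  have hpath (i : ι × Bool) := (hP.isXYPath i).1
  obtain ⟨φ, hφ, hfull⟩ := exists_isExitMap (next_injective (P := P)) two_ne_zero
    (card_node_eq_le_two (hM := hM) hpath hP.disjoint)
  have (j : ι) : ∃ q : PathPkg G, IsXYPath G X Y q ∧ q.2.2.IsChordless ∧
      pkgSupport q ⊆ vertex '' region P φ j := by
    obtain ⟨a, ha, hstart⟩ := hfull (.inl j) (card_node_eq_inl j)
    exact exists_isXYPath_support_subset_region hP.isXYPath hφ ha hstart
  choose Q hQ hQ_chordless hQ_region using this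
  have separated {j j' : ι} (hj : j ≠ j') {x y : V} (hx : x ∈ pkgSupport (Q j))
      (hy : y ∈ pkgSupport (Q j')) : x ≠ y ∧ s(x, y) ∉ D ∪ M := by
    obtain ⟨a, ha, rfl⟩ := hQ_region j hx
    obtain ⟨b, hb, rfl⟩ := hQ_region j' hy
    have hnode : ¬(a.vertex = b.vertex ∨ s(a.vertex, b.vertex) ∈ M) := fun h =>
      node_ne_node_of_mem_region hj ha hb ((node_eq_node_iff (not_isTerminal_of_mem_region ha)).2
        ⟨not_isTerminal_of_mem_region hb, h⟩)
    rw [not_or] at hnode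
    exact ⟨hnode.1, not_or.2 ⟨hP.mk_vertex_notMem hD hφ hj ha hb, hnode.2⟩⟩
  exact ⟨Q, hQ, hQ_chordless, fun _ _ hj _ hx hy => (separated hj hx hy).1 rfl,
    fun _ _ hj _ hx _ hy => (separated hj hx hy).2⟩

end IsLinkageAvoiding

theorem exists_isLinkageAvoiding_empty {G : SimpleGraph V} {X Y : Set V} {κ : Type*}
    {P : κ → PathPkg G} (hP : ∀ i, IsXYPath G X Y (P i))
    (hdisj : Pairwise fun i j => PkgDisjoint (P i) (P j)) :
    ∃ Q : κ → PathPkg G, IsLinkageAvoiding G X Y ∅ Q := by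
  choose q hq hq_chordless hqP using fun i => exists_isPath_isChordless_support_subset (P i).2.2
  exact ⟨fun i => ⟨_, _, q i⟩, fun i => ⟨hq i, (hP i).2⟩, hq_chordless,
    fun i j hij x hx hy => hdisj hij x (hqP i hx) (hqP j hy), fun _ _ _ _ _ _ _ => id⟩

theorem exists_isLinkageAvoiding_iUnion {G : SimpleGraph V} {X Y : Set V} {n k : ℕ}
    {M : Fin n → Set (Sym2 V)} (hM : ∀ i, IsInducedMatching G (M i))
    {P : Fin (2 ^ n * k) → PathPkg G} (hP : IsLinkageAvoiding G X Y ∅ P) :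
    ∃ Q : Fin k → PathPkg G, IsLinkageAvoiding G X Y (⋃ i, M i) Q := by
  induction n generalizing k with
  | zero =>
    rw [Set.iUnion_of_empty]
    exact ⟨_, hP.comp_injective (finCongr (by simp : k = 2 ^ 0 * k)).injective⟩
  | succ n ih =>
    have hcard : 2 ^ n * (k * 2) = 2 ^ (n + 1) * k := by ring
    obtain ⟨Q, hQ⟩ := ih (fun i => hM i.castSucc) (hP.comp_injective (finCongr hcard).injective)
    have hD : ⋃ i : Fin n, M i.castSucc ⊆ G.edgeSet := Set.iUnion_subset fun i => (hM _).1
    let pairing : Fin k × Bool ≃ Fin (k * 2) :=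
      ((Equiv.refl _).prodCongr finTwoEquiv.symm).trans finProdFinEquiv
    obtain ⟨R, hR⟩ := (hQ.comp_injective pairing.injective).exists_union hD (hM (Fin.last n))
    have hunion : (⋃ i : Fin n, M i.castSucc) ∪ M (Fin.last n) = ⋃ i, M i := by
      ext e
      simp only [Set.mem_union, Set.mem_iUnion, Fin.exists_fin_succ']
    exact ⟨R, hunion ▸ hR⟩

theorem statement_1 (G : SimpleGraph V) (X Y : Set V) (k : ℕ)
    (hχ : ∃ n, HasStrongEdgeColoring G n)
    (P : Fin (2 ^ strongChromaticIndex G * k) → PathPkg G)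
    (hP : ∀ i, IsXYPath G X Y (P i))
    (hdisj : Pairwise fun i j => PkgDisjoint (P i) (P j)) :
    ∃ Q : Fin k → PathPkg G,
      (∀ i, IsXYPath G X Y (Q i)) ∧
      Pairwise fun i j => PkgNonAdj G (Q i) (Q j) := by
  obtain ⟨M, hM, -, hcover⟩ : HasStrongEdgeColoring G (strongChromaticIndex G) := Nat.sInf_mem hχ
  obtain ⟨P', hP'⟩ := exists_isLinkageAvoiding_empty hP hdisj
  obtain ⟨Q, hQ⟩ := exists_isLinkageAvoiding_iUnion hM hP'
  rw [hcover] at hQ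
  refine ⟨Q, hQ.isXYPath, fun i j hij a ha b hb => ⟨?_, hQ.notMem hij a ha b hb⟩⟩
  rintro rfl
  exact hQ.disjoint hij a ha hb
end
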